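/- arXiv:1205.0849 — 2 statements merged into one kernel-verified Lean document; each statement's English description precedes it below -/
import Mathlib

section
/- Let p ≥ √3 and let u be a global Schwartz solution of the defocusing generalized KdV equation ∂_t u + ∂_x^3 u = ∂_x(|u|^{p-1} u). Suppose u is soliton-like with decay, i.e., there exist a function x : ℝ → ℝ, constants C > 0 and ε > 0 such that for every R > 0, sup_{t ∈ ℝ} ∫_{|x − x(t)| > R} u²(t,x) dx ≤ C / R^{2+ε}. Then u ≡ 0. -/
open MeasureTheory Real

/-!
Along a solution the mass density `u²` and the energy density `u_x² / 2 + |u|^(p+1) / (p+1)` obey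
balance laws `∂ₜ ρ = ∂ₓ j + γ` with `j = ∂ₓ β - α`, so that formally
`d/dt ∫ φ ρ = ∫ (φ' α + φ'' β + φ γ)` for every weight `φ`. Since the Schwartz seminorms of `u t`
are not assumed to be locally bounded in `t`, differentiation under the integral is not available.
On a time interval where mass plus energy is bounded, Kato smoothing with cubic weights controls
`(1 + x²) (u_x² + |u|^(p+1))` in space-time, difference quotients then control `u_xx²`, and the
laws integrate rigorously; in particular mass and energy are conserved there. Mass plus energy is a
lower semicontinuous function of time, so the Baire category theorem gives conservation for all
times.

When `p ≥ √3`, Cauchy–Schwarz for `u` against `√3 u_xx - |u|^(p-1) u` gives Tao's monotonicity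
formula: the centre of mass drifts to the right of the centre of energy, and it does so at a
positive rate because mass with bounded second moment cannot spread out. The virial identity for
`∫ (x - c)² u²` over unit time intervals, with `c` the centre of mass at the initial time, bounds
their distance, so the mass must vanish.
-/

namespace GKdV

open Filter Topology Set
open scoped SchwartzMap

section Integration

variable {α : Type*} [MeasurableSpace α] {μ : Measure α}

lemma integrable_mul_of_integrable_sq {f g : α → ℝ} (hf : AEStronglyMeasurable f μ)
    (hg : AEStronglyMeasurable g μ) (hf2 : Integrable (fun x => f x ^ 2) μ)
    (hg2 : Integrable (fun x => g x ^ 2) μ) : Integrable (fun x => f x * g x) μ :=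
  ((memLp_two_iff_integrable_sq hf).2 hf2).integrable_mul ((memLp_two_iff_integrable_sq hg).2 hg2)

lemma sq_integral_mul_le {f g : α → ℝ} (hf : AEStronglyMeasurable f μ)
    (hg : AEStronglyMeasurable g μ) (hf2 : Integrable (fun x => f x ^ 2) μ)
    (hg2 : Integrable (fun x => g x ^ 2) μ) :
    (∫ x, f x * g x ∂μ) ^ 2 ≤ (∫ x, f x ^ 2 ∂μ) * ∫ x, g x ^ 2 ∂μ := by
  have hfg := integrable_mul_of_integrable_sq hf hg hf2 hg2
  have quadratic_nonneg : ∀ s : ℝ, 0 ≤ (∫ x, g x ^ 2 ∂μ) * (s * s)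
      + 2 * (∫ x, f x * g x ∂μ) * s + ∫ x, f x ^ 2 ∂μ := by
    intro s
    have expand : ∫ x, (f x + s * g x) ^ 2 ∂μ = (∫ x, g x ^ 2 ∂μ) * (s * s)
        + 2 * (∫ x, f x * g x ∂μ) * s + ∫ x, f x ^ 2 ∂μ := by
      have : ∀ x, (f x + s * g x) ^ 2 = s * s * g x ^ 2 + 2 * s * (f x * g x) + f x ^ 2 :=
        fun x => by ring
      simp_rw [this]
      rw [integral_add (by exact (hg2.const_mul _).add (hfg.const_mul _)) hf2,
        integral_add (hg2.const_mul _) (hfg.const_mul _), integral_const_mul, integral_const_mul]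
      ring
    exact expand ▸ integral_nonneg fun x => sq_nonneg _
  have := discrim_le_zero quadratic_nonneg
  rw [discrim] at this
  linarith

lemma integrable_sq_and_sq_mul_of_one_add_sq_mul {w f : α → ℝ}
    (hw : AEStronglyMeasurable w μ) (hf : AEStronglyMeasurable f μ)
    (hint : Integrable (fun x => (1 + w x ^ 2) * f x ^ 2) μ) :
    Integrable (fun x => f x ^ 2) μ ∧ Integrable (fun x => (w x * f x) ^ 2) μ := by
  refine ⟨hint.mono' (hf.pow 2) (ae_of_all _ fun x => ?_),
    hint.mono' ((hw.mul hf).pow 2) (ae_of_all _ fun x => ?_)⟩ <;>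
  · rw [norm_eq_abs, abs_of_nonneg (sq_nonneg _)]
    linarith [sq_nonneg (f x), sq_nonneg (w x * f x), mul_pow (w x) (f x) 2]

lemma integrable_and_integral_le_of_lintegral_le {f : α → ℝ} {C : ℝ}
    (hf : AEStronglyMeasurable f μ) (hf0 : ∀ x, 0 ≤ f x) (hC : 0 ≤ C)
    (h : ∫⁻ x, ENNReal.ofReal (f x) ∂μ ≤ ENNReal.ofReal C) :
    Integrable f μ ∧ ∫ x, f x ∂μ ≤ C := by
  have hint : Integrable f μ :=
    ⟨hf, (hasFiniteIntegral_iff_ofReal (ae_of_all _ hf0)).2 (h.trans_lt ENNReal.ofReal_lt_top)⟩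
  refine ⟨hint, (ENNReal.ofReal_le_ofReal_iff hC).1 ?_⟩
  rwa [ofReal_integral_eq_lintegral_ofReal hint (ae_of_all _ hf0)]

lemma lintegral_ofReal_le_of_integral_le {f : α → ℝ} {C : ℝ} (hf : Integrable f μ)
    (hf0 : ∀ x, 0 ≤ f x) (h : ∫ x, f x ∂μ ≤ C) :
    ∫⁻ x, ENNReal.ofReal (f x) ∂μ ≤ ENNReal.ofReal C := by
  rw [← ofReal_integral_eq_lintegral_ofReal hf (ae_of_all _ hf0)]
  exact ENNReal.ofReal_le_ofReal h

lemma integrable_and_integral_le_mul_of_lintegral_le {f g : α → ℝ} {c : ℝ}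
    (hf : AEStronglyMeasurable f μ) (hf0 : ∀ x, 0 ≤ f x) (hc : 0 ≤ c) (hg : Integrable g μ)
    (hg0 : ∀ x, 0 ≤ g x)
    (h : ∫⁻ x, ENNReal.ofReal (f x) ∂μ ≤ ENNReal.ofReal c * ∫⁻ x, ENNReal.ofReal (g x) ∂μ) :
    Integrable f μ ∧ ∫ x, f x ∂μ ≤ c * ∫ x, g x ∂μ := by
  refine integrable_and_integral_le_of_lintegral_le hf hf0 (mul_nonneg hc (integral_nonneg hg0)) ?_
  rwa [ENNReal.ofReal_mul hc, ofReal_integral_eq_lintegral_ofReal hg (ae_of_all _ hg0)]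

lemma integrable_and_integral_le_of_tendsto {F : ℕ → α → ℝ} {f : α → ℝ} {C : ℝ} (hC : 0 ≤ C)
    (hF : ∀ n, Integrable (F n) μ) (hF0 : ∀ n x, 0 ≤ F n x) (hFC : ∀ n, ∫ x, F n x ∂μ ≤ C)
    (hlim : ∀ x, Tendsto (fun n => F n x) atTop (𝓝 (f x))) :
    Integrable f μ ∧ ∫ x, f x ∂μ ≤ C := by
  have hf0 : ∀ x, 0 ≤ f x := fun x => ge_of_tendsto' (hlim x) fun n => hF0 n x
  refine integrable_and_integral_le_of_lintegral_le
    (aestronglyMeasurable_of_tendsto_ae atTop (fun n => (hF n).aestronglyMeasurable)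
      (ae_of_all _ hlim)) hf0 hC ?_
  calc ∫⁻ x, ENNReal.ofReal (f x) ∂μ
      = ∫⁻ x, liminf (fun n => ENNReal.ofReal (F n x)) atTop ∂μ :=
        lintegral_congr fun x => ((ENNReal.tendsto_ofReal (hlim x)).liminf_eq).symm
    _ ≤ liminf (fun n => ∫⁻ x, ENNReal.ofReal (F n x) ∂μ) atTop :=
        lintegral_liminf_le' fun n => (hF n).aemeasurable.ennreal_ofReal
    _ ≤ ENNReal.ofReal C := by
        refine (liminf_le_liminf (Eventually.of_forall fun n => ?_)).trans_eq
          (liminf_const (ENNReal.ofReal C))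
        exact lintegral_ofReal_le_of_integral_le (hF n) (hF0 n) (hFC n)

lemma lintegral_Ioc_zero_one_ofReal :
    ∫⁻ R in Ioc (0 : ℝ) 1, ENNReal.ofReal R = ENNReal.ofReal (1 / 2) := by
  rw [← ofReal_integral_eq_lintegral_ofReal
    (intervalIntegral.intervalIntegrable_id (a := (0 : ℝ)) (b := 1)).1
    (ae_restrict_of_forall_mem measurableSet_Ioc fun R hR => hR.1.le),
    ← intervalIntegral.integral_of_le zero_le_one, integral_id]
  norm_num

lemma lintegral_Ioi_one_rpow {ε : ℝ} (hε : 0 < ε) :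
    ∫⁻ R in Ioi (1 : ℝ), ENNReal.ofReal (R ^ (-(1 + ε))) = ENNReal.ofReal (1 / ε) := by
  have hexp : -(1 + ε) < -1 := by linarith
  rw [← ofReal_integral_eq_lintegral_ofReal (integrableOn_Ioi_rpow_of_lt hexp one_pos)
    (ae_restrict_of_forall_mem measurableSet_Ioi fun R hR =>
      rpow_nonneg (zero_le_one.trans hR.le) _),
    integral_Ioi_rpow_of_lt hexp one_pos, one_rpow]
  congr 1
  rw [show -(1 + ε) + 1 = -ε by ring, neg_div_neg_eq]

lemma lintegral_sq_le_of_tail_le {f : α → ℝ} (hf : AEMeasurable f μ) (hf0 : ∀ x, 0 ≤ f x)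
    {C ε : ℝ} (hC : 0 ≤ C) (hε : 0 < ε)
    (htail : ∀ R : ℝ, 0 < R → μ {x | R < f x} ≤ ENNReal.ofReal (C / R ^ (2 + ε))) :
    ∫⁻ x, ENNReal.ofReal (f x ^ 2) ∂μ ≤ μ univ + ENNReal.ofReal (2 * C / ε) := by
  have layer_cake : ∫⁻ x, ENNReal.ofReal (f x ^ 2) ∂μ =
      ENNReal.ofReal 2 * ∫⁻ R in Ioi (0 : ℝ), μ {x | R < f x} * ENNReal.ofReal R := by
    have := lintegral_rpow_eq_lintegral_meas_lt_mul μ (ae_of_all _ hf0) hf two_pos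
    norm_num at this ⊢
    exact this
  have near : ∫⁻ R in Ioc (0 : ℝ) 1, μ {x | R < f x} * ENNReal.ofReal R ≤
      μ univ * ENNReal.ofReal (1 / 2) := by
    rw [← lintegral_Ioc_zero_one_ofReal, ← lintegral_const_mul _ ENNReal.measurable_ofReal]
    exact lintegral_mono fun R => by gcongr; exact subset_univ _
  have far : ∫⁻ R in Ioi (1 : ℝ), μ {x | R < f x} * ENNReal.ofReal R ≤ ENNReal.ofReal (C / ε) := by
    rw [div_eq_mul_one_div, ENNReal.ofReal_mul hC, ← lintegral_Ioi_one_rpow hε,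
      ← lintegral_const_mul _ (by fun_prop)]
    refine setLIntegral_mono (by fun_prop) fun R hR => ?_
    have hR0 : 0 < R := zero_lt_one.trans hR
    refine (mul_le_mul_left (htail R hR0) _).trans_eq ?_
    rw [← ENNReal.ofReal_mul (by positivity), ← ENNReal.ofReal_mul hC, div_mul_eq_mul_div,
      mul_div_assoc, ← rpow_one_sub' hR0.le (by linarith)]
    ring_nf
  rw [layer_cake, ← Ioc_union_Ioi_eq_Ioi zero_le_one,
    lintegral_union measurableSet_Ioi (Ioc_disjoint_Ioi le_rfl), mul_add]
  gcongr ?_ + ?_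
  · calc _ ≤ ENNReal.ofReal 2 * (μ univ * ENNReal.ofReal (1 / 2)) := by gcongr
      _ = μ univ := by rw [mul_left_comm, ← ENNReal.ofReal_mul two_pos.le]; norm_num
  · calc _ ≤ ENNReal.ofReal 2 * ENNReal.ofReal (C / ε) := by gcongr
      _ = ENNReal.ofReal (2 * C / ε) := by rw [← ENNReal.ofReal_mul two_pos.le, mul_div_assoc]

lemma integral_sq_mul_le_of_tail_le {f g : α → ℝ} (hf : Measurable f) (hf0 : ∀ x, 0 ≤ f x)
    (hg : Integrable g μ) (hg0 : ∀ x, 0 ≤ g x) {C ε : ℝ} (hC : 0 ≤ C) (hε : 0 < ε)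
    (htail : ∀ R : ℝ, 0 < R → ∫ x in {x | R < f x}, g x ∂μ ≤ C / R ^ (2 + ε)) :
    ∫ x, f x ^ 2 * g x ∂μ ≤ ∫ x, g x ∂μ + 2 * C / ε := by
  have hg_meas : AEMeasurable (fun x => ENNReal.ofReal (g x)) μ := hg.aemeasurable.ennreal_ofReal
  have tail_density (R : ℝ) (hR : 0 < R) :
      μ.withDensity (fun x => ENNReal.ofReal (g x)) {x | R < f x} ≤
        ENNReal.ofReal (C / R ^ (2 + ε)) := by
    rw [withDensity_apply _ (measurableSet_lt measurable_const hf)]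
    exact lintegral_ofReal_le_of_integral_le hg.integrableOn hg0 (htail R hR)
  have moment := lintegral_sq_le_of_tail_le hf.aemeasurable hf0 hC hε tail_density
  rw [withDensity_apply _ MeasurableSet.univ, setLIntegral_univ,
    lintegral_withDensity_eq_lintegral_mul₀ hg_meas (by fun_prop),
    ← ofReal_integral_eq_lintegral_ofReal hg (ae_of_all _ hg0),
    ← ENNReal.ofReal_add (integral_nonneg hg0) (by positivity)] at moment
  refine (integrable_and_integral_le_of_lintegral_le
    ((hf.pow_const 2).aestronglyMeasurable.mul hg.aestronglyMeasurable)
    (fun x => mul_nonneg (sq_nonneg _) (hg0 x))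
    (add_nonneg (integral_nonneg hg0) (by positivity)) ?_).2
  refine (lintegral_congr fun x => ?_).trans_le moment
  exact (congrArg _ (mul_comm _ _)).trans (ENNReal.ofReal_mul (hg0 x))

end Integration

section BaireCategory

lemma eq_of_eventually_eq_of_isPreconnected {X Y : Type*} [TopologicalSpace X] {S : Set X}
    (hS : IsPreconnected S) {f : X → Y} (hf : ∀ x ∈ S, ∀ᶠ y in 𝓝 x, f y = f x) {a b : X}
    (ha : a ∈ S) (hb : b ∈ S) : f a = f b := by
  have : PreconnectedSpace S := isPreconnected_iff_preconnectedSpace.1 hS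
  have : IsLocallyConstant (S.domRestrict f) := (IsLocallyConstant.iff_eventually_eq _).2 fun x =>
    continuousAt_subtype_val.eventually (hf x x.2)
  exact this.apply_eq_of_preconnectedSpace ⟨a, ha⟩ ⟨b, hb⟩

lemma exists_eventually_le_of_lowerSemicontinuous {X : Type*} [TopologicalSpace X] [BaireSpace X]
    [Nonempty X] {K : X → ℝ} (hK : LowerSemicontinuous K) :
    ∃ x, ∃ N : ℝ, ∀ᶠ y in 𝓝 x, K y ≤ N := by
  obtain ⟨n, x, hx⟩ := nonempty_interior_of_iUnion_of_closed
    (fun n : ℕ => hK.isClosed_preimage (n : ℝ))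
    (eq_univ_of_forall fun x => mem_iUnion.2 (exists_nat_ge (K x)))
  exact ⟨x, n, mem_interior_iff_mem_nhds.1 hx⟩

lemma exists_eventually_nhdsWithin_le {K : ℝ → ℝ} (hK : LowerSemicontinuous K) {Z : Set ℝ}
    (hZ : IsClosed Z) (hne : Z.Nonempty) : ∃ z ∈ Z, ∃ N, ∀ᶠ t in 𝓝[Z] z, K t ≤ N := by
  have := hZ.isComplete.completeSpace_coe
  have := hne.to_subtype
  obtain ⟨z, N, h⟩ := exists_eventually_le_of_lowerSemicontinuous (hK.comp continuous_subtype_val)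
    (X := Z)
  exact ⟨z, z.2, N, by rwa [nhdsWithin_eq_map_subtype_coe z.2, eventually_map]⟩

variable {K : ℝ → ℝ}

lemma exists_mem_closed_eq_of_bddAbove_const
    (hconst : ∀ a b, BddAbove (K '' uIcc a b) → K a = K b) {Z : Set ℝ} (hZ : IsClosed Z)
    (hloc : ∀ t ∉ Z, ∀ᶠ s in 𝓝 t, K s = K t) {t z : ℝ} (hz : z ∈ Z) :
    ∃ w ∈ Z ∩ uIcc t z, K t = K w := by
  by_cases ht : t ∈ Z
  · exact ⟨t, ⟨ht, left_mem_uIcc⟩, rfl⟩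
  obtain ⟨w, ⟨hwZ, hwtz⟩, hmin⟩ := (isCompact_uIcc.inter_left hZ : IsCompact (Z ∩ uIcc t z))
    |>.exists_isMinOn ⟨z, hz, right_mem_uIcc⟩ (continuous_id.sub continuous_const).abs.continuousOn
      (f := fun s => |s - t|)
  have hwt : 0 < |w - t| := abs_sub_pos.2 fun h => ht (h ▸ hwZ)
  refine ⟨w, ⟨hwZ, hwtz⟩, hconst t w ⟨max (K t) (K w), ?_⟩⟩
  let S := AffineMap.lineMap t w '' Ico (0 : ℝ) 1
  have hS : IsPreconnected S := isPreconnected_Ico.image _ AffineMap.lineMap_continuous.continuousOn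
  have hSZ : ∀ s ∈ S, s ∉ Z := by
    rintro _ ⟨r, ⟨hr0, hr1⟩, rfl⟩ hrZ
    have hr : AffineMap.lineMap t w r ∈ uIcc t z :=
      uIcc_subset_uIcc left_mem_uIcc hwtz <| by
        rw [← segment_eq_uIcc, segment_eq_image_lineMap]
        exact ⟨r, ⟨hr0, hr1.le⟩, rfl⟩
    have hle : |w - t| ≤ r * |w - t| := by
      simpa [AffineMap.lineMap_apply, abs_mul, abs_of_nonneg hr0] using hmin ⟨hrZ, hr⟩
    nlinarith
  have hK : ∀ s ∈ S, K s = K t := fun s hs =>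
    eq_of_eventually_eq_of_isPreconnected hS (fun x hx => hloc x (hSZ x hx)) hs ⟨0, by simp⟩
  rw [← segment_eq_uIcc, segment_eq_image_lineMap]
  rintro _ ⟨_, ⟨r, ⟨hr0, hr1⟩, rfl⟩, rfl⟩
  rcases hr1.eq_or_lt with rfl | hr
  · simp
  · exact (hK _ ⟨r, ⟨hr0, hr⟩, rfl⟩).trans_le (le_max_left _ _)

/-- Baire's theorem on the closed set `Z` of non-local-constancy bounds `K` on a portion of `Z`;
outside `Z` the bound is inherited from the nearest point of `Z`. -/
lemma eq_of_lowerSemicontinuous_of_bddAbove (hK : LowerSemicontinuous K)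
    (hconst : ∀ a b, BddAbove (K '' uIcc a b) → K a = K b) (a b : ℝ) : K a = K b := by
  let Z := {t | ∀ᶠ s in 𝓝 t, K s = K t}ᶜ
  have hZ : IsClosed Z := isClosed_compl_iff.2 <| isOpen_iff_mem_nhds.2 fun t ht => by
    filter_upwards [ht, eventually_eventually_nhds.2 ht] with s hs hs'
    filter_upwards [hs'] with r hr using hr.trans hs.symm
  suffices hempty : Z = ∅ from
    eq_of_eventually_eq_of_isPreconnected isPreconnected_univ
      (fun t _ => notMem_compl_iff.1 (eq_empty_iff_forall_notMem.1 hempty t))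
      (mem_univ a) (mem_univ b)
  by_contra! hne
  obtain ⟨z, hz, N, hN⟩ := exists_eventually_nhdsWithin_le hK hZ hne
  obtain ⟨δ, hδ, hball⟩ := Metric.eventually_nhds_iff_ball.1 (eventually_nhdsWithin_iff.1 hN)
  have huIcc : ∀ t ∈ Metric.ball z δ, uIcc t z ⊆ Metric.ball z δ := fun t ht => by
    rw [← segment_eq_uIcc]
    exact (convex_ball z δ).segment_subset ht (Metric.mem_ball_self hδ)
  have hbound : ∀ t ∈ Metric.ball z δ, K t ≤ N := fun t ht => by
    obtain ⟨w, ⟨hwZ, hwtz⟩, htw⟩ := exists_mem_closed_eq_of_bddAbove_const hconst hZ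
      (fun s hs => notMem_compl_iff.1 hs) hz (t := t)
    exact htw.trans_le (hball w (huIcc t ht hwtz) hwZ)
  refine hz ?_
  filter_upwards [Metric.ball_mem_nhds z hδ] with t ht
  exact hconst t z ⟨N, forall_mem_image.2 fun s hs => hbound s (huIcc t ht hs)⟩

end BaireCategory

section Weights

/-- `φ'` and `φ''` are the first and second derivatives of `φ`, and `φ''` is continuous. -/
structure HasTwoDerivs (φ φ' φ'' : ℝ → ℝ) : Prop where
  hasDerivAt : ∀ x, HasDerivAt φ (φ' x) x
  hasDerivAt' : ∀ x, HasDerivAt φ' (φ'' x) x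
  continuous'' : Continuous φ''

namespace HasTwoDerivs

variable {φ φ' φ'' ψ ψ' ψ'' : ℝ → ℝ} {x : ℝ}

lemma of_contDiff (h : ContDiff ℝ 2 φ) : HasTwoDerivs φ (deriv φ) (deriv (deriv φ)) := by
  have h' : ContDiff ℝ 1 (deriv φ) := (contDiff_succ_iff_deriv (n := 1).1 h).2.2
  exact ⟨fun x => (h.differentiable two_ne_zero x).hasDerivAt,
    fun x => (h'.differentiable one_ne_zero x).hasDerivAt, h'.continuous_deriv le_rfl⟩

lemma continuous (h : HasTwoDerivs φ φ' φ'') : Continuous φ :=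
  continuous_iff_continuousAt.2 fun x => (h.hasDerivAt x).continuousAt

lemma continuous' (h : HasTwoDerivs φ φ' φ'') : Continuous φ' :=
  continuous_iff_continuousAt.2 fun x => (h.hasDerivAt' x).continuousAt

lemma deriv_eq (h : HasTwoDerivs φ φ' φ'') : deriv φ = φ' :=
  funext fun x => (h.hasDerivAt x).deriv

lemma deriv_eq' (h : HasTwoDerivs φ φ' φ'') : deriv φ' = φ'' :=
  funext fun x => (h.hasDerivAt' x).deriv

lemma mul (h : HasTwoDerivs φ φ' φ'') (k : HasTwoDerivs ψ ψ' ψ'') :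
    HasTwoDerivs (fun x => φ x * ψ x) (fun x => φ' x * ψ x + φ x * ψ' x)
      (fun x => φ'' x * ψ x + 2 * (φ' x * ψ' x) + φ x * ψ'' x) where
  hasDerivAt x := (h.hasDerivAt x).mul (k.hasDerivAt x)
  hasDerivAt' x := (((h.hasDerivAt' x).mul (k.hasDerivAt x)).add
    ((h.hasDerivAt x).mul (k.hasDerivAt' x))).congr_deriv (by ring)
  continuous'' := ((h.continuous''.mul k.continuous).add
    (continuous_const.mul (h.continuous'.mul k.continuous'))).add (h.continuous.mul k.continuous'')

lemma comp_mul_left (h : HasTwoDerivs φ φ' φ'') (r : ℝ) :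
    HasTwoDerivs (fun x => φ (r * x)) (fun x => r * φ' (r * x)) (fun x => r ^ 2 * φ'' (r * x)) where
  hasDerivAt x := ((h.hasDerivAt _).comp x ((hasDerivAt_id' x).const_mul r)).congr_deriv (by ring)
  hasDerivAt' x := (((h.hasDerivAt' _).comp x ((hasDerivAt_id' x).const_mul r)).const_mul
    r).congr_deriv (by ring)
  continuous'' := by have := h.continuous''; fun_prop

lemma eq_of_eventuallyEq (h : HasTwoDerivs φ φ' φ'') (k : HasTwoDerivs ψ ψ' ψ'')
    (hφψ : φ =ᶠ[𝓝 x] ψ) : φ' x = ψ' x ∧ φ'' x = ψ'' x := by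
  have h' : φ' =ᶠ[𝓝 x] ψ' := by simpa only [h.deriv_eq, k.deriv_eq] using hφψ.deriv
  exact ⟨h'.eq_of_nhds, by simpa only [h.deriv_eq', k.deriv_eq'] using h'.deriv_eq⟩

lemma hasCompactSupport' (h : HasTwoDerivs φ φ' φ'') (hφ : HasCompactSupport φ) :
    HasCompactSupport φ' :=
  h.deriv_eq ▸ hφ.deriv

lemma hasCompactSupport'' (h : HasTwoDerivs φ φ' φ'') (hφ : HasCompactSupport φ) :
    HasCompactSupport φ'' :=
  h.deriv_eq' ▸ (h.hasCompactSupport' hφ).deriv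

end HasTwoDerivs

/-- A spatial weight `φ` against which a balance law is integrated. The gauge `W` controls `φ'`,
`φ''` and the quotient `φ / (1 + |x|)`, so multiplying `φ` by cutoffs at scale `n` changes its
first two derivatives by at most a multiple of `W`. -/
structure IsWeight (φ φ' φ'' W : ℝ → ℝ) : Prop extends HasTwoDerivs φ φ' φ'' where
  abs_le : ∀ x, |φ x| ≤ (1 + |x|) * W x
  abs_deriv_le : ∀ x, |φ' x| ≤ W x
  abs_deriv2_le : ∀ x, |φ'' x| ≤ W x

/-- Smooth functions `χ n` of compact support, eventually equal to `1` near each point, whose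
derivatives decay like `1 / (1 + |x|)` uniformly in `n`. -/
structure IsCutoffSequence (χ χ' χ'' : ℕ → ℝ → ℝ) (C : ℝ) : Prop where
  hasTwoDerivs : ∀ n, HasTwoDerivs (χ n) (χ' n) (χ'' n)
  hasCompactSupport : ∀ n, HasCompactSupport (χ n)
  eventually_eq_one : ∀ x, ∀ᶠ n in atTop, ∀ᶠ y in 𝓝 x, χ n y = 1
  abs_le_one : ∀ n x, |χ n x| ≤ 1
  abs_deriv_le : ∀ n x, (1 + |x|) * |χ' n x| ≤ C
  abs_deriv2_le : ∀ n x, (1 + |x|) * |χ'' n x| ≤ C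

lemma exists_one_add_abs_mul_comp_le {f : ℝ → ℝ} (hf : Continuous f) (hs : HasCompactSupport f) :
    ∃ C, ∀ r : ℝ, 0 < r → r ≤ 1 → ∀ x, (1 + |x|) * (r * |f (r * x)|) ≤ C := by
  obtain ⟨C, hC⟩ := (hs.mul_left (f := fun y => 1 + |y|)).exists_bound_of_continuous
    (by fun_prop)
  refine ⟨C, fun r hr0 hr1 x => ?_⟩
  have hpos : 0 < 1 + |r * x| := by positivity
  calc (1 + |x|) * (r * |f (r * x)|) = (r + r * |x|) * |f (r * x)| := by ring
    _ ≤ (1 + |r * x|) * |f (r * x)| := by rw [abs_mul, abs_of_pos hr0]; gcongr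
    _ = ‖(1 + |r * x|) * f (r * x)‖ := by
        rw [norm_mul, norm_eq_abs, norm_eq_abs, abs_of_pos hpos]
    _ ≤ C := hC (r * x)

lemma exists_isCutoffSequence : ∃ χ χ' χ'' C, IsCutoffSequence χ χ' χ'' C := by
  let b : ContDiffBump (0 : ℝ) := ⟨1, 2, one_pos, one_lt_two⟩
  have hb : HasTwoDerivs b (deriv b) (deriv (deriv b)) := .of_contDiff b.contDiff
  obtain ⟨C₁, hC₁⟩ := exists_one_add_abs_mul_comp_le hb.continuous' b.hasCompactSupport.deriv
  obtain ⟨C₂, hC₂⟩ := exists_one_add_abs_mul_comp_le hb.continuous'' b.hasCompactSupport.deriv.deriv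
  let r : ℕ → ℝ := fun n => 1 / (n + 1)
  have hr0 n : 0 < r n := Nat.one_div_pos_of_nat
  have hr1 n : r n ≤ 1 := div_le_one_of_le₀ (by simp) (by positivity)
  refine ⟨fun n x => b (r n * x), _, _, max C₁ C₂, fun n => hb.comp_mul_left (r n), fun n =>
    b.hasCompactSupport.comp_homeomorph (Homeomorph.mulLeft₀ (r n) (hr0 n).ne'), fun x => ?_,
    fun n x => ?_, fun n x => ?_, fun n x => ?_⟩
  · have hlim : Tendsto (fun n => r n * x) atTop (𝓝 0) := by
      simpa [r] using tendsto_one_div_add_atTop_nhds_zero_nat.mul_const x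
    filter_upwards [hlim.eventually (Metric.ball_mem_nhds 0 one_pos)] with n hn
    have hcont : ContinuousAt (fun y => r n * y) x := by fun_prop
    filter_upwards [hcont.eventually (Metric.isOpen_ball.mem_nhds hn)] with y hy
    exact b.one_of_mem_closedBall (Metric.ball_subset_closedBall hy)
  · exact (abs_of_nonneg b.nonneg).trans_le b.le_one
  · rw [abs_mul, abs_of_pos (hr0 n)]
    exact (hC₁ _ (hr0 n) (hr1 n) x).trans (le_max_left _ _)
  · rw [abs_mul, abs_of_pos (pow_pos (hr0 n) 2)]
    refine le_trans ?_ ((hC₂ _ (hr0 n) (hr1 n) x).trans (le_max_right _ _))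
    gcongr
    exact pow_le_of_le_one (hr0 n).le (hr1 n) two_ne_zero

lemma IsCutoffSequence.nonneg_bound {χ χ' χ'' : ℕ → ℝ → ℝ} {C : ℝ}
    (hχ : IsCutoffSequence χ χ' χ'' C) : 0 ≤ C :=
  (by positivity : 0 ≤ (1 + |(0 : ℝ)|) * |χ' 0 0|).trans (hχ.abs_deriv_le 0 0)

lemma IsCutoffSequence.mul_isWeight {χ χ' χ'' : ℕ → ℝ → ℝ} {C : ℝ} {φ φ' φ'' W : ℝ → ℝ}
    (hχ : IsCutoffSequence χ χ' χ'' C) (hφ : IsWeight φ φ' φ'' W) (n : ℕ) (x : ℝ) :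
    |χ' n x * φ x + χ n x * φ' x| ≤ (3 * C + 1) * W x ∧
      |χ'' n x * φ x + 2 * (χ' n x * φ' x) + χ n x * φ'' x| ≤ (3 * C + 1) * W x := by
  have hW : 0 ≤ W x := (abs_nonneg _).trans (hφ.abs_deriv_le x)
  have hx : 0 ≤ |x| := abs_nonneg x
  have mul_weight {ξ : ℝ} (hξ : (1 + |x|) * |ξ| ≤ C) : |ξ * φ x| ≤ C * W x := by
    rw [abs_mul]
    nlinarith [mul_le_mul_of_nonneg_left (hφ.abs_le x) (abs_nonneg ξ)]
  have mul_cutoff {ξ : ℝ} (hξ : |ξ| ≤ W x) : |χ n x * ξ| ≤ W x := by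
    rw [abs_mul]
    nlinarith [hχ.abs_le_one n x, abs_nonneg ξ]
  have mixed : |2 * (χ' n x * φ' x)| ≤ 2 * (C * W x) := by
    rw [abs_mul, abs_two, abs_mul]
    gcongr
    · exact hχ.nonneg_bound
    · nlinarith [hχ.abs_deriv_le n x, abs_nonneg (χ' n x)]
    · exact hφ.abs_deriv_le x
  constructor
  · calc |χ' n x * φ x + χ n x * φ' x| ≤ C * W x + W x :=
          (abs_add_le _ _).trans (add_le_add (mul_weight (hχ.abs_deriv_le n x))
            (mul_cutoff (hφ.abs_deriv_le x)))
      _ ≤ (3 * C + 1) * W x := by nlinarith [mul_nonneg hχ.nonneg_bound hW]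
  · calc |χ'' n x * φ x + 2 * (χ' n x * φ' x) + χ n x * φ'' x|
        ≤ C * W x + 2 * (C * W x) + W x :=
          (abs_add_three _ _ _).trans (add_le_add_three (mul_weight (hχ.abs_deriv2_le n x)) mixed
            (mul_cutoff (hφ.abs_deriv2_le x)))
      _ = (3 * C + 1) * W x := by ring

lemma IsWeight.exists_hasCompactSupport_approx {φ φ' φ'' W : ℝ → ℝ} (hφ : IsWeight φ φ' φ'' W) :
    ∃ (ψ ψ' ψ'' : ℕ → ℝ → ℝ) (C : ℝ), (∀ n, HasTwoDerivs (ψ n) (ψ' n) (ψ'' n)) ∧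
      (∀ n, HasCompactSupport (ψ n)) ∧
      (∀ x, ∀ᶠ n in atTop, ψ n x = φ x ∧ ψ' n x = φ' x ∧ ψ'' n x = φ'' x) ∧
      ∀ n x, |ψ n x| ≤ |φ x| ∧ |ψ' n x| ≤ C * W x ∧ |ψ'' n x| ≤ C * W x := by
  obtain ⟨χ, χ', χ'', C, hχ⟩ := exists_isCutoffSequence
  have hψ n := (hχ.hasTwoDerivs n).mul hφ.toHasTwoDerivs
  refine ⟨_, _, _, 3 * C + 1, hψ, fun n => (hχ.hasCompactSupport n).mul_right, fun x => ?_,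
    fun n x => ⟨?_, hχ.mul_isWeight hφ n x⟩⟩
  · filter_upwards [hχ.eventually_eq_one x] with n hn
    have heq : (fun y => χ n y * φ y) =ᶠ[𝓝 x] φ := by
      filter_upwards [hn] with y hy
      rw [hy, one_mul]
    exact ⟨heq.eq_of_nhds, (hψ n).eq_of_eventuallyEq hφ.toHasTwoDerivs heq⟩
  · rw [abs_mul]
    exact mul_le_of_le_one_left (abs_nonneg _) (hχ.abs_le_one n x)

end Weights

section Slab

/-- Lebesgue measure on the space-time slab `(a, b] × ℝ`. -/
noncomputable def slab (a b : ℝ) : Measure (ℝ × ℝ) := (volume.restrict (Ioc a b)).prod volume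

variable {a b : ℝ}

lemma slab_eq_restrict : slab a b = volume.restrict (Ioc a b ×ˢ univ) := by
  rw [slab, Measure.volume_eq_prod, ← Measure.prod_restrict, Measure.restrict_univ]

lemma ae_slab_of_forall_mem {P : ℝ × ℝ → Prop} (h : ∀ t ∈ Icc a b, ∀ x, P (t, x)) :
    ∀ᵐ q ∂slab a b, P q := by
  rw [slab_eq_restrict]
  exact ae_restrict_of_forall_mem (measurableSet_Ioc.prod MeasurableSet.univ) fun q hq =>
    h q.1 (Ioc_subset_Icc_self hq.1) q.2

lemma integrable_slab_of_hasCompactSupport {ψ : ℝ → ℝ} {f : ℝ → ℝ → ℝ} (hψ : Continuous ψ)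
    (hψ_supp : HasCompactSupport ψ) (hf : Continuous fun q : ℝ × ℝ => f q.1 q.2) :
    Integrable (fun q : ℝ × ℝ => ψ q.2 * f q.1 q.2) (slab a b) := by
  have hcont : Continuous fun q : ℝ × ℝ => ψ q.2 * f q.1 q.2 := by fun_prop
  have hcpt : IntegrableOn (fun q : ℝ × ℝ => ψ q.2 * f q.1 q.2) (Icc a b ×ˢ tsupport ψ) volume :=
    hcont.continuousOn.integrableOn_compact (isCompact_Icc.prod hψ_supp)
  rw [slab_eq_restrict]
  refine hcpt.of_forall_sdiff_eq_zero (measurableSet_Ioc.prod MeasurableSet.univ) ?_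
  rintro ⟨t, x⟩ ⟨⟨ht, -⟩, hx⟩
  have : x ∉ tsupport ψ := fun h => hx ⟨Ioc_subset_Icc_self ht, h⟩
  simp [image_eq_zero_of_notMem_tsupport this]

lemma integrable_slab_of_integral_le {f : ℝ → ℝ → ℝ} {N : ℝ}
    (hf : Continuous fun q : ℝ × ℝ => f q.1 q.2) (hf0 : ∀ t x, 0 ≤ f t x)
    (hint : ∀ t ∈ Icc a b, Integrable (f t)) (hN : ∀ t ∈ Icc a b, ∫ x, f t x ≤ N) :
    Integrable (fun q : ℝ × ℝ => f q.1 q.2) (slab a b) := by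
  have hmeas : AEStronglyMeasurable (fun q : ℝ × ℝ => f q.1 q.2) (slab a b) :=
    hf.aestronglyMeasurable
  rw [slab] at hmeas ⊢
  refine (integrable_prod_iff hmeas).2 ⟨ae_restrict_of_forall_mem measurableSet_Ioc fun t ht =>
    hint t (Ioc_subset_Icc_self ht), ?_⟩
  refine (integrable_const N).mono' hmeas.norm.integral_prod_right'
    (ae_restrict_of_forall_mem measurableSet_Ioc fun t ht => ?_)
  simp only [norm_eq_abs, abs_of_nonneg (hf0 _ _)]
  rw [abs_of_nonneg (integral_nonneg (hf0 t))]
  exact hN t (Ioc_subset_Icc_self ht)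

lemma integral_slab_le {f : ℝ → ℝ → ℝ} {c : ℝ} (hab : a ≤ b)
    (hf : Integrable (fun q : ℝ × ℝ => f q.1 q.2) (slab a b))
    (h : ∀ t ∈ Icc a b, ∫ x, f t x ≤ c) : ∫ q, f q.1 q.2 ∂slab a b ≤ c * (b - a) := by
  unfold slab at hf ⊢
  rw [integral_prod _ hf]
  calc ∫ t in Ioc a b, ∫ x, f t x ≤ ∫ _ in Ioc a b, c :=
        setIntegral_mono_on hf.integral_prod_left (integrable_const c) measurableSet_Ioc
          fun t ht => h t (Ioc_subset_Icc_self ht)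
    _ = c * (b - a) := by simp [hab, mul_comm]

lemma le_integral_slab {f : ℝ → ℝ → ℝ} {c : ℝ} (hab : a ≤ b)
    (hf : Integrable (fun q : ℝ × ℝ => f q.1 q.2) (slab a b))
    (h : ∀ t ∈ Icc a b, c ≤ ∫ x, f t x) : c * (b - a) ≤ ∫ q, f q.1 q.2 ∂slab a b := by
  have := integral_slab_le (f := fun t x => -f t x) (c := -c) hab hf.neg fun t ht => by
    rw [integral_neg]
    exact neg_le_neg (h t ht)
  rw [integral_neg] at this
  linarith

end Slab

section BalanceLaw

/-- The balance law `∂ₜρ = ∂ₓj + γ` with flux `j = ∂ₓβ - α`, where `ρₜ` stands for `∂ₜρ`; `α` is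
called the reduced flux and `β` the potential. Writing `j` this way moves the derivatives of the
solution that are not square integrable onto the weight: formally
`d/dt ∫ φ ρ = ∫ (φ' α + φ'' β + φ γ)`. -/
structure IsBalanceLaw (ρ ρₜ j α β γ : ℝ → ℝ → ℝ) : Prop where
  hasDerivAt_density : ∀ t x, HasDerivAt (fun s => ρ s x) (ρₜ t x) t
  hasDerivAt_flux : ∀ t x, HasDerivAt (j t) (ρₜ t x - γ t x) x
  hasDerivAt_potential : ∀ t x, HasDerivAt (β t) (j t x + α t x) x
  continuous_density : Continuous fun q : ℝ × ℝ => ρ q.1 q.2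
  continuous_density_deriv : Continuous fun q : ℝ × ℝ => ρₜ q.1 q.2
  continuous_reducedFlux : Continuous fun q : ℝ × ℝ => α q.1 q.2
  continuous_potential : Continuous fun q : ℝ × ℝ => β q.1 q.2
  continuous_source : Continuous fun q : ℝ × ℝ => γ q.1 q.2

namespace IsBalanceLaw

variable {ρ ρₜ j α β γ : ℝ → ℝ → ℝ} {φ φ' φ'' W : ℝ → ℝ} {a b : ℝ}

lemma integral_slice_of_hasCompactSupport (law : IsBalanceLaw ρ ρₜ j α β γ)
    (hφ : HasTwoDerivs φ φ' φ'') (hφ_supp : HasCompactSupport φ) (t : ℝ) :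
    ∫ x, φ x * ρₜ t x = ∫ x, (φ' x * α t x + φ'' x * β t x + φ x * γ t x) := by
  have hφ'_supp := hφ.hasCompactSupport' hφ_supp
  have hφ''_supp := hφ.hasCompactSupport'' hφ_supp
  have := hφ.continuous
  have := hφ.continuous'
  have := hφ.continuous''
  have := law.continuous_density_deriv
  have := law.continuous_reducedFlux
  have := law.continuous_potential
  have := law.continuous_source
  have hj : Continuous (j t) :=
    continuous_iff_continuousAt.2 fun x => (law.hasDerivAt_flux t x).continuousAt
  have hint {ψ f : ℝ → ℝ} (hψ : Continuous ψ) (hψ_supp : HasCompactSupport ψ) (hf : Continuous f) :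
      Integrable (fun x => ψ x * f x) :=
    (hψ.mul hf).integrable_of_hasCompactSupport hψ_supp.mul_right
  have hlhs : Integrable fun x => φ x * ρₜ t x := hint (by fun_prop) hφ_supp (by fun_prop)
  have hrhs : Integrable fun x => φ' x * α t x + φ'' x * β t x + φ x * γ t x :=
    ((hint (by fun_prop) hφ'_supp (by fun_prop)).add
      (hint (by fun_prop) hφ''_supp (by fun_prop))).add (hint (by fun_prop) hφ_supp (by fun_prop))
  have hderiv x : HasDerivAt (fun x => φ x * j t x - φ' x * β t x)
      (φ x * ρₜ t x - (φ' x * α t x + φ'' x * β t x + φ x * γ t x)) x :=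
    (((hφ.hasDerivAt x).mul (law.hasDerivAt_flux t x)).sub
      ((hφ.hasDerivAt' x).mul (law.hasDerivAt_potential t x))).congr_deriv (by ring)
  have := integral_eq_zero_of_hasDerivAt_of_integrable hderiv (hlhs.sub hrhs)
    ((hint (by fun_prop) hφ_supp hj).sub (hint (by fun_prop) hφ'_supp (by fun_prop)))
  rwa [integral_sub hlhs hrhs, sub_eq_zero] at this

lemma integral_slab_of_hasCompactSupport (law : IsBalanceLaw ρ ρₜ j α β γ) (hab : a ≤ b)
    (hφ : HasTwoDerivs φ φ' φ'') (hφ_supp : HasCompactSupport φ) :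
    (∫ x, φ x * ρ b x) - (∫ x, φ x * ρ a x) =
      ∫ q, (φ' q.2 * α q.1 q.2 + φ'' q.2 * β q.1 q.2 + φ q.2 * γ q.1 q.2) ∂slab a b := by
  have hρ := law.continuous_density
  have hρₜ := law.continuous_density_deriv
  have hρₜ_int : Integrable (fun q : ℝ × ℝ => φ q.2 * ρₜ q.1 q.2) (slab a b) :=
    integrable_slab_of_hasCompactSupport hφ.continuous hφ_supp hρₜ
  have hrhs_int : Integrable (fun q : ℝ × ℝ =>
      φ' q.2 * α q.1 q.2 + φ'' q.2 * β q.1 q.2 + φ q.2 * γ q.1 q.2) (slab a b) :=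
    ((integrable_slab_of_hasCompactSupport hφ.continuous' (hφ.hasCompactSupport' hφ_supp)
      law.continuous_reducedFlux).add
    (integrable_slab_of_hasCompactSupport hφ.continuous'' (hφ.hasCompactSupport'' hφ_supp)
      law.continuous_potential)).add
    (integrable_slab_of_hasCompactSupport hφ.continuous hφ_supp law.continuous_source)
  have hslice (t : ℝ) : Integrable fun x => φ x * ρ t x :=
    (hφ.continuous.mul (by fun_prop)).integrable_of_hasCompactSupport hφ_supp.mul_right
  have time_ftc (x : ℝ) : φ x * ρ b x - φ x * ρ a x = ∫ t in Ioc a b, φ x * ρₜ t x := by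
    rw [integral_const_mul, ← intervalIntegral.integral_of_le hab,
      intervalIntegral.integral_eq_sub_of_hasDerivAt (fun t _ => law.hasDerivAt_density t x)
        (Continuous.intervalIntegrable (by fun_prop) _ _), mul_sub]
  rw [← integral_sub (hslice b) (hslice a)]
  simp_rw [time_ftc]
  rw [slab] at hρₜ_int hrhs_int ⊢
  rw [← integral_prod_symm (fun q : ℝ × ℝ => φ q.2 * ρₜ q.1 q.2) hρₜ_int,
    integral_prod _ hρₜ_int, integral_prod _ hrhs_int]
  exact integral_congr_ae (ae_of_all _ fun t =>
    law.integral_slice_of_hasCompactSupport hφ hφ_supp t)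

end IsBalanceLaw

lemma tendsto_integral_of_eventually_eq {α : Type*} [MeasurableSpace α] {μ : Measure α}
    {F : ℕ → α → ℝ} {f g : α → ℝ} (hF : ∀ n, AEStronglyMeasurable (F n) μ) (hg : Integrable g μ)
    (hbound : ∀ n x, |F n x| ≤ g x) (hlim : ∀ x, ∀ᶠ n in atTop, F n x = f x) :
    Tendsto (fun n => ∫ x, F n x ∂μ) atTop (𝓝 (∫ x, f x ∂μ)) :=
  tendsto_integral_of_dominated_convergence g hF hg (fun n => ae_of_all _ (hbound n))
    (ae_of_all _ fun x => tendsto_const_nhds.congr' <| (hlim x).mono fun _ => Eq.symm)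

namespace IsBalanceLaw

variable {ρ ρₜ j α β γ : ℝ → ℝ → ℝ} {φ φ' φ'' W : ℝ → ℝ} {a b : ℝ}

theorem integral_slab (law : IsBalanceLaw ρ ρₜ j α β γ) (hab : a ≤ b)
    (hφ : IsWeight φ φ' φ'' W)
    (hα : Integrable (fun q : ℝ × ℝ => W q.2 * α q.1 q.2) (slab a b))
    (hβ : Integrable (fun q : ℝ × ℝ => W q.2 * β q.1 q.2) (slab a b))
    (hγ : Integrable (fun q : ℝ × ℝ => φ q.2 * γ q.1 q.2) (slab a b))
    (hρa : Integrable fun x => φ x * ρ a x) (hρb : Integrable fun x => φ x * ρ b x) :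
    (∫ x, φ x * ρ b x) - (∫ x, φ x * ρ a x) =
      ∫ q, (φ' q.2 * α q.1 q.2 + φ'' q.2 * β q.1 q.2 + φ q.2 * γ q.1 q.2) ∂slab a b := by
  obtain ⟨ψ, ψ', ψ'', C, hψ, hψ_supp, hψ_eq, hψ_le⟩ := hφ.exists_hasCompactSupport_approx
  have hW x : 0 ≤ W x := (abs_nonneg _).trans (hφ.abs_deriv_le x)
  have hρ := law.continuous_density
  have slice_limit {t : ℝ} (ht : Integrable fun x => φ x * ρ t x) :
      Tendsto (fun n => ∫ x, ψ n x * ρ t x) atTop (𝓝 (∫ x, φ x * ρ t x)) := by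
    refine tendsto_integral_of_eventually_eq (fun n => ?_) ht.abs (fun n x => ?_) fun x => ?_
    · exact ((hψ n).continuous.mul (by fun_prop)).aestronglyMeasurable
    · rw [abs_mul, abs_mul]
      exact mul_le_mul_of_nonneg_right (hψ_le n x).1 (abs_nonneg _)
    · filter_upwards [hψ_eq x] with n hn
      rw [hn.1]
  have slab_limit : Tendsto (fun n => ∫ q : ℝ × ℝ,
      (ψ' n q.2 * α q.1 q.2 + ψ'' n q.2 * β q.1 q.2 + ψ n q.2 * γ q.1 q.2) ∂slab a b) atTop
      (𝓝 (∫ q, (φ' q.2 * α q.1 q.2 + φ'' q.2 * β q.1 q.2 + φ q.2 * γ q.1 q.2) ∂slab a b)) := by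
    refine tendsto_integral_of_eventually_eq (fun n => Continuous.aestronglyMeasurable ?_)
      (((hα.abs.const_mul C).add (hβ.abs.const_mul C)).add hγ.abs) (fun n q => ?_) fun q => ?_
    · have := (hψ n).continuous
      have := (hψ n).continuous'
      have := (hψ n).continuous''
      have := law.continuous_reducedFlux
      have := law.continuous_potential
      have := law.continuous_source
      fun_prop
    · obtain ⟨h0, h1, h2⟩ := hψ_le n q.2
      refine (abs_add_three _ _ _).trans (add_le_add_three ?_ ?_ ?_) <;> beta_reduce
      · rw [abs_mul, abs_mul, abs_of_nonneg (hW _), ← mul_assoc]; gcongr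
      · rw [abs_mul, abs_mul, abs_of_nonneg (hW _), ← mul_assoc]; gcongr
      · rw [abs_mul, abs_mul]; gcongr
    · filter_upwards [hψ_eq q.2] with n hn
      rw [hn.1, hn.2.1, hn.2.2]
  refine tendsto_nhds_unique ((slice_limit hρb).sub (slice_limit hρa))
    (slab_limit.congr fun n => ?_)
  exact (law.integral_slab_of_hasCompactSupport hab (hψ n) (hψ_supp n)).symm

end IsBalanceLaw

end BalanceLaw

/-- The partial derivative in the second (space) variable. -/
noncomputable def spaceDeriv (f : ℝ → ℝ → ℝ) (t x : ℝ) : ℝ := deriv (f t) x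

/-- The partial derivative in the first (time) variable. -/
noncomputable def timeDeriv (f : ℝ → ℝ → ℝ) (t x : ℝ) : ℝ := deriv (fun s => f s x) t

local notation "∂ₓ" => spaceDeriv
local notation "∂ₜ" => timeDeriv

section SpaceTime

/-- Joint smoothness of a function of time and space. -/
def IsSmooth (f : ℝ → ℝ → ℝ) : Prop := ContDiff ℝ (⊤ : ℕ∞) fun q : ℝ × ℝ => f q.1 q.2

namespace IsSmooth

variable {f : ℝ → ℝ → ℝ}

lemma continuous (hf : IsSmooth f) : Continuous fun q : ℝ × ℝ => f q.1 q.2 := ContDiff.continuous hf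

lemma continuous_slice (hf : IsSmooth f) (t : ℝ) : Continuous (f t) := by
  have := hf.continuous
  fun_prop

lemma contDiff_fderiv (hf : IsSmooth f) :
    ContDiff ℝ (⊤ : ℕ∞) (fderiv ℝ fun q : ℝ × ℝ => f q.1 q.2) :=
  ContDiff.fderiv_right (m := (⊤ : ℕ∞)) hf (by simp)

lemma hasFDerivAt (hf : IsSmooth f) (q : ℝ × ℝ) :
    HasFDerivAt (fun q : ℝ × ℝ => f q.1 q.2) (fderiv ℝ (fun q : ℝ × ℝ => f q.1 q.2) q) q :=
  (ContDiff.differentiable hf (by simp) q).hasFDerivAt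

lemma hasDerivAt_space_fderiv (hf : IsSmooth f) (q : ℝ × ℝ) :
    HasDerivAt (f q.1) (fderiv ℝ (fun q : ℝ × ℝ => f q.1 q.2) q (0, 1)) q.2 :=
  HasFDerivAt.comp_hasDerivAt (l := fun q : ℝ × ℝ => f q.1 q.2) q.2 (hf.hasFDerivAt q)
    ((hasDerivAt_const q.2 q.1).prodMk (hasDerivAt_id q.2))

lemma hasDerivAt_time_fderiv (hf : IsSmooth f) (q : ℝ × ℝ) :
    HasDerivAt (fun s => f s q.2) (fderiv ℝ (fun q : ℝ × ℝ => f q.1 q.2) q (1, 0)) q.1 :=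
  HasFDerivAt.comp_hasDerivAt (l := fun q : ℝ × ℝ => f q.1 q.2) q.1 (hf.hasFDerivAt q)
    ((hasDerivAt_id q.1).prodMk (hasDerivAt_const q.1 q.2))

lemma hasDerivAt_space (hf : IsSmooth f) (t x : ℝ) : HasDerivAt (f t) (∂ₓ f t x) x :=
  (hf.hasDerivAt_space_fderiv (t, x)).differentiableAt.hasDerivAt

lemma hasDerivAt_time (hf : IsSmooth f) (t x : ℝ) : HasDerivAt (fun s => f s x) (∂ₜ f t x) t :=
  (hf.hasDerivAt_time_fderiv (t, x)).differentiableAt.hasDerivAt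

lemma spaceDeriv_eq_fderiv (hf : IsSmooth f) : (fun q : ℝ × ℝ => ∂ₓ f q.1 q.2) =
    fun q => fderiv ℝ (fun q : ℝ × ℝ => f q.1 q.2) q (0, 1) :=
  funext fun q => (hf.hasDerivAt_space_fderiv q).deriv

lemma timeDeriv_eq_fderiv (hf : IsSmooth f) : (fun q : ℝ × ℝ => ∂ₜ f q.1 q.2) =
    fun q => fderiv ℝ (fun q : ℝ × ℝ => f q.1 q.2) q (1, 0) :=
  funext fun q => (hf.hasDerivAt_time_fderiv q).deriv

lemma spaceDeriv (hf : IsSmooth f) : IsSmooth (∂ₓ f) := by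
  unfold IsSmooth
  rw [hf.spaceDeriv_eq_fderiv]
  exact hf.contDiff_fderiv.clm_apply contDiff_const

lemma timeDeriv (hf : IsSmooth f) : IsSmooth (∂ₜ f) := by
  unfold IsSmooth
  rw [hf.timeDeriv_eq_fderiv]
  exact hf.contDiff_fderiv.clm_apply contDiff_const

lemma timeDeriv_spaceDeriv (hf : IsSmooth f) (t x : ℝ) : ∂ₜ (∂ₓ f) t x = ∂ₓ (∂ₜ f) t x := by
  have hsymm : IsSymmSndFDerivAt ℝ (fun q : ℝ × ℝ => f q.1 q.2) (t, x) := by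
    refine ContDiffAt.isSymmSndFDerivAt (n := (⊤ : ℕ∞)) (ContDiff.contDiffAt hf) ?_
    rw [minSmoothness_of_isRCLikeNormedField]
    exact WithTop.coe_le_coe.2 (le_top (a := (2 : ℕ∞)))
  have hd : DifferentiableAt ℝ (fderiv ℝ fun q : ℝ × ℝ => f q.1 q.2) (t, x) :=
    hf.contDiff_fderiv.differentiable (by simp) _
  calc ∂ₜ (∂ₓ f) t x
      = fderiv ℝ (fderiv ℝ fun q : ℝ × ℝ => f q.1 q.2) (t, x) (1, 0) (0, 1) := by
        rw [congrFun hf.spaceDeriv.timeDeriv_eq_fderiv (t, x), hf.spaceDeriv_eq_fderiv,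
          fderiv_clm_apply hd (by fun_prop)]
        simp
    _ = fderiv ℝ (fderiv ℝ fun q : ℝ × ℝ => f q.1 q.2) (t, x) (0, 1) (1, 0) := hsymm.eq _ _
    _ = ∂ₓ (∂ₜ f) t x := by
        rw [congrFun hf.timeDeriv.spaceDeriv_eq_fderiv (t, x), hf.timeDeriv_eq_fderiv,
          fderiv_clm_apply hd (by fun_prop)]
        simp

end IsSmooth

end SpaceTime

section RapidDecay

/-- A continuous function decaying faster than every power of `1 + |x|`. This is what is used of
Schwartz functions after multiplication by the non-smooth power `|u| ^ (p - 1)`. -/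
structure RapidDecay (f : ℝ → ℝ) : Prop where
  continuous : Continuous f
  exists_bound : ∀ k : ℕ, ∃ C, ∀ x, (1 + |x|) ^ k * |f x| ≤ C

lemma rapidDecay_schwartzMap (F : 𝓢(ℝ, ℝ)) : RapidDecay F where
  continuous := F.continuous
  exists_bound k := by
    refine ⟨2 ^ k * ((Finset.Iic (k, 0)).sup fun m => SchwartzMap.seminorm ℝ m.1 m.2) F,
      fun x => ?_⟩
    simpa using SchwartzMap.one_add_le_sup_seminorm_apply (𝕜 := ℝ) (m := (k, 0)) (k := k) (n := 0)
      le_rfl le_rfl F x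

namespace RapidDecay

variable {f g w : ℝ → ℝ} {C : ℝ}

lemma exists_abs_le (hf : RapidDecay f) : ∃ C, ∀ x, |f x| ≤ C := by
  obtain ⟨C, hC⟩ := hf.exists_bound 0
  exact ⟨C, fun x => by simpa using hC x⟩

lemma of_abs_le (hf : RapidDecay f) (hg : Continuous g) {k : ℕ}
    (h : ∀ x, |g x| ≤ C * (1 + |x|) ^ k * |f x|) (hC : 0 ≤ C) : RapidDecay g where
  continuous := hg
  exists_bound m := by
    obtain ⟨D, hD⟩ := hf.exists_bound (m + k)
    refine ⟨C * D, fun x => ?_⟩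
    calc (1 + |x|) ^ m * |g x| ≤ (1 + |x|) ^ m * (C * (1 + |x|) ^ k * |f x|) := by gcongr; exact h x
      _ = C * ((1 + |x|) ^ (m + k) * |f x|) := by ring
      _ ≤ C * D := by gcongr; exact hD x

lemma bounded_mul (hf : RapidDecay f) (hw : Continuous w) (hwC : ∀ x, |w x| ≤ C) :
    RapidDecay fun x => w x * f x :=
  hf.of_abs_le (C := C) (k := 0) (hw.mul hf.continuous) (fun x => by
    rw [abs_mul, pow_zero, mul_one]
    exact mul_le_mul_of_nonneg_right (hwC x) (abs_nonneg _)) ((abs_nonneg _).trans (hwC 0))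

lemma mul (hf : RapidDecay f) (hg : RapidDecay g) : RapidDecay fun x => f x * g x := by
  obtain ⟨C, hC⟩ := hf.exists_abs_le
  exact hg.bounded_mul hf.continuous hC

lemma sq (hf : RapidDecay f) : RapidDecay fun x => f x ^ 2 := by
  simpa only [_root_.sq] using hf.mul hf

lemma const_mul (hf : RapidDecay f) (c : ℝ) : RapidDecay fun x => c * f x :=
  hf.bounded_mul continuous_const fun _ => le_rfl

lemma add (hf : RapidDecay f) (hg : RapidDecay g) : RapidDecay fun x => f x + g x where
  continuous := hf.continuous.add hg.continuous
  exists_bound k := by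
    obtain ⟨C, hC⟩ := hf.exists_bound k
    obtain ⟨D, hD⟩ := hg.exists_bound k
    refine ⟨C + D, fun x => ?_⟩
    calc (1 + |x|) ^ k * |f x + g x| ≤ (1 + |x|) ^ k * (|f x| + |g x|) := by
          gcongr; exact abs_add_le _ _
      _ ≤ C + D := by rw [mul_add]; exact add_le_add (hC x) (hD x)

lemma sub (hf : RapidDecay f) (hg : RapidDecay g) : RapidDecay fun x => f x - g x := by
  simpa only [neg_one_mul, sub_eq_add_neg] using hf.add (hg.const_mul (-1))

lemma id_mul (hf : RapidDecay f) : RapidDecay fun x => x * f x :=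
  hf.of_abs_le (C := 1) (k := 1) (continuous_id.mul hf.continuous) (fun x => by
    rw [abs_mul]; gcongr; linarith) zero_le_one

lemma sub_const_mul (hf : RapidDecay f) (c : ℝ) : RapidDecay fun x => (x - c) * f x := by
  simpa only [sub_mul] using hf.id_mul.sub (hf.const_mul c)

lemma integrable (hf : RapidDecay f) : Integrable f := by
  obtain ⟨C, hC⟩ := hf.exists_bound 2
  have hdom : Integrable fun x : ℝ => (1 + ‖x‖) ^ (-2 : ℝ) :=
    integrable_one_add_norm (by norm_num)
  refine (hdom.const_mul C).mono' hf.continuous.aestronglyMeasurable (ae_of_all _ fun x => ?_)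
  rw [norm_eq_abs, rpow_neg (by positivity), rpow_two, ← div_eq_mul_inv,
    le_div_iff₀ (by positivity), mul_comm]
  exact hC x

end RapidDecay

/-- Every time slice of `f` is a Schwartz function. -/
def HasSchwartzSlices (f : ℝ → ℝ → ℝ) : Prop := ∀ t, ∃ F : 𝓢(ℝ, ℝ), ∀ x, f t x = F x

namespace HasSchwartzSlices

variable {f : ℝ → ℝ → ℝ}

lemma rapidDecay (hf : HasSchwartzSlices f) (t : ℝ) : RapidDecay (f t) := by
  obtain ⟨F, hF⟩ := hf t
  rw [funext hF]
  exact rapidDecay_schwartzMap F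

lemma spaceDeriv (hf : HasSchwartzSlices f) : HasSchwartzSlices (spaceDeriv f) := by
  intro t
  obtain ⟨F, hF⟩ := hf t
  refine ⟨SchwartzMap.derivCLM ℝ ℝ F, fun x => ?_⟩
  rw [GKdV.spaceDeriv, funext hF, SchwartzMap.derivCLM_apply]

end HasSchwartzSlices

end RapidDecay

section SignedPow

/-- The nonlinearity `|y|^(p-1) y` of the equation. -/
noncomputable def signedPow (p y : ℝ) : ℝ := |y| ^ (p - 1) * y

variable {p S y z : ℝ}

lemma abs_rpow_add_one (hp : 0 < p) (y : ℝ) : |y| ^ (p + 1) = |y| ^ (p - 1) * y ^ 2 := by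
  rcases eq_or_ne y 0 with rfl | hy
  · simp [zero_rpow (by linarith : p + 1 ≠ 0)]
  · rw [← sq_abs y, ← rpow_two, ← rpow_add (abs_pos.2 hy)]
    ring_nf

lemma mul_signedPow (hp : 0 < p) (y : ℝ) : y * signedPow p y = |y| ^ (p + 1) := by
  rw [abs_rpow_add_one hp, signedPow]
  ring

lemma hasDerivAt_abs_rpow_add_one (hp : 0 < p) (y : ℝ) :
    HasDerivAt (fun y => |y| ^ (p + 1)) ((p + 1) * signedPow p y) y := by
  convert hasDerivAt_abs_rpow y (p := p + 1) (by linarith) using 1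
  rw [signedPow, show p + 1 - 2 = p - 1 by ring, mul_assoc]

lemma hasDerivAt_signedPow (hp : 1 < p) (y : ℝ) :
    HasDerivAt (signedPow p) (p * |y| ^ (p - 1)) y := by
  rcases eq_or_ne y 0 with rfl | hy
  · have hcont : Tendsto (fun z : ℝ => |z| ^ (p - 1)) (𝓝[≠] 0) (𝓝 (|0| ^ (p - 1))) :=
      ((continuous_abs.rpow_const fun _ => Or.inr (by linarith)).tendsto 0).mono_left
        nhdsWithin_le_nhds
    rw [abs_zero, zero_rpow (by linarith)] at hcont ⊢
    rw [mul_zero, hasDerivAt_iff_tendsto_slope]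
    refine hcont.congr' ?_
    filter_upwards [self_mem_nhdsWithin] with z hz
    simp [slope_def_field, signedPow, show z ≠ 0 from hz]
  · have hquot : signedPow p =ᶠ[𝓝 y] fun z => |z| ^ (p + 1) / z := by
      filter_upwards [isOpen_ne.mem_nhds hy] with z hz
      rw [← mul_signedPow (by linarith), mul_div_cancel_left₀ _ hz]
    refine (((hasDerivAt_abs_rpow_add_one (by linarith) y).div (hasDerivAt_id' y)
      hy).congr_of_eventuallyEq hquot).congr_deriv ?_
    rw [abs_rpow_add_one (by linarith), signedPow]
    field

lemma continuous_signedPow (hp : 1 < p) : Continuous (signedPow p) :=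
  continuous_iff_continuousAt.2 fun y => (hasDerivAt_signedPow hp y).continuousAt

lemma abs_rpow_add_one_le (hp : 1 ≤ p) (hy : |y| ≤ S) : |y| ^ (p + 1) ≤ S ^ (p - 1) * y ^ 2 := by
  rw [abs_rpow_add_one (by linarith)]
  gcongr

lemma sq_signedPow_le (hp : 1 ≤ p) (hy : |y| ≤ S) :
    signedPow p y ^ 2 ≤ (S ^ (p - 1)) ^ 2 * y ^ 2 := by
  rw [signedPow, mul_pow]
  gcongr

lemma abs_signedPow_sub_le (hp : 1 < p) (hy : |y| ≤ S) (hz : |z| ≤ S) :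
    |signedPow p y - signedPow p z| ≤ p * S ^ (p - 1) * |y - z| := by
  refine (convex_Icc (-S) S).norm_image_sub_le_of_norm_hasDerivWithin_le
    (fun x _ => (hasDerivAt_signedPow hp x).hasDerivWithinAt) (fun x hx => ?_)
    (abs_le.1 hz) (abs_le.1 hy)
  have hxS : |x| ≤ S := abs_le.2 hx
  rw [norm_eq_abs, abs_of_nonneg (by positivity)]
  gcongr

end SignedPow

section Solution

/-- A global solution of the defocusing generalized Korteweg–de Vries equation with exponent
`p > 1`, jointly smooth and with Schwartz time slices. -/
structure IsSolution (p : ℝ) (u : ℝ → ℝ → ℝ) : Prop where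
  one_lt : 1 < p
  smooth : IsSmooth u
  schwartz : HasSchwartzSlices u
  pde : ∀ t x, ∂ₜ u t x + ∂ₓ (∂ₓ (∂ₓ u)) t x = ∂ₓ (fun t x => signedPow p (u t x)) t x

/-- The energy density `u_x² / 2 + |u|^(p+1) / (p+1)`. -/
noncomputable def energyDensity (p : ℝ) (u : ℝ → ℝ → ℝ) (t x : ℝ) : ℝ :=
  ∂ₓ u t x ^ 2 / 2 + |u t x| ^ (p + 1) / (p + 1)

/-- The reduced flux of the density `u²`. -/
noncomputable def massFlux (p : ℝ) (u : ℝ → ℝ → ℝ) (t x : ℝ) : ℝ :=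
  -(3 * ∂ₓ u t x ^ 2 + 2 * p / (p + 1) * |u t x| ^ (p + 1))

/-- The potential in the balance law of the density `u²`. -/
noncomputable def massPotential (u : ℝ → ℝ → ℝ) (t x : ℝ) : ℝ := -2 * (u t x * ∂ₓ u t x)

/-- The reduced flux of the energy density. -/
noncomputable def energyFlux (p : ℝ) (u : ℝ → ℝ → ℝ) (t x : ℝ) : ℝ :=
  2 * (∂ₓ (∂ₓ u) t x * signedPow p (u t x))
    - (3 / 2 * ∂ₓ (∂ₓ u) t x ^ 2 + 1 / 2 * signedPow p (u t x) ^ 2)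

/-- The potential in the balance law of the energy density. -/
noncomputable def energyPotential (p : ℝ) (u : ℝ → ℝ → ℝ) (t x : ℝ) : ℝ :=
  ∂ₓ u t x * (signedPow p (u t x) - ∂ₓ (∂ₓ u) t x)

namespace IsSolution

variable {p : ℝ} {u : ℝ → ℝ → ℝ} (h : IsSolution p u)
include h

lemma pos : 0 < p := zero_lt_one.trans h.one_lt

lemma hasDerivAt_signedPow (t x : ℝ) :
    HasDerivAt (fun y => signedPow p (u t y)) (p * |u t x| ^ (p - 1) * ∂ₓ u t x) x :=
  (GKdV.hasDerivAt_signedPow h.one_lt (u t x)).comp x (h.smooth.hasDerivAt_space t x)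

lemma timeDeriv_eq (t x : ℝ) :
    ∂ₜ u t x = p * |u t x| ^ (p - 1) * ∂ₓ u t x - ∂ₓ (∂ₓ (∂ₓ u)) t x := by
  rw [eq_sub_iff_add_eq, h.pde]
  exact (h.hasDerivAt_signedPow t x).deriv

lemma hasDerivAt_abs_rpow_space (t x : ℝ) : HasDerivAt (fun y => |u t y| ^ (p + 1))
    ((p + 1) * signedPow p (u t x) * ∂ₓ u t x) x :=
  (hasDerivAt_abs_rpow_add_one h.pos (u t x)).comp x (h.smooth.hasDerivAt_space t x)

lemma hasDerivAt_abs_rpow_time (t x : ℝ) : HasDerivAt (fun s => |u s x| ^ (p + 1))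
    ((p + 1) * signedPow p (u t x) * ∂ₜ u t x) t :=
  HasDerivAt.comp (h₂ := fun y => |y| ^ (p + 1)) t (hasDerivAt_abs_rpow_add_one h.pos (u t x))
    (h.smooth.hasDerivAt_time t x)

lemma hasDerivAt_signedPow_sub (t x : ℝ) :
    HasDerivAt (fun y => signedPow p (u t y) - ∂ₓ (∂ₓ u) t y) (∂ₜ u t x) x :=
  h.timeDeriv_eq t x ▸
    (h.hasDerivAt_signedPow t x).sub (h.smooth.spaceDeriv.spaceDeriv.hasDerivAt_space t x)

lemma continuous_signedPow : Continuous fun q : ℝ × ℝ => signedPow p (u q.1 q.2) :=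
  (GKdV.continuous_signedPow h.one_lt).comp h.smooth.continuous

lemma continuous_abs_rpow : Continuous fun q : ℝ × ℝ => |u q.1 q.2| ^ (p + 1) :=
  h.smooth.continuous.abs.rpow_const fun _ => Or.inr (by linarith [h.pos])

lemma continuous_energyDensity : Continuous fun q : ℝ × ℝ => energyDensity p u q.1 q.2 := by
  have := h.smooth.spaceDeriv.continuous
  have := h.continuous_abs_rpow
  unfold energyDensity
  fun_prop

lemma continuous_massFlux : Continuous fun q : ℝ × ℝ => massFlux p u q.1 q.2 := by
  have := h.smooth.spaceDeriv.continuous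
  have := h.continuous_abs_rpow
  unfold massFlux
  fun_prop

lemma continuous_energyFlux : Continuous fun q : ℝ × ℝ => energyFlux p u q.1 q.2 := by
  have := h.smooth.spaceDeriv.spaceDeriv.continuous
  have := h.continuous_signedPow
  unfold energyFlux
  fun_prop

lemma continuous_energyPotential : Continuous fun q : ℝ × ℝ => energyPotential p u q.1 q.2 := by
  have := h.smooth.spaceDeriv.continuous
  have := h.smooth.spaceDeriv.spaceDeriv.continuous
  have := h.continuous_signedPow
  unfold energyPotential
  fun_prop

lemma energyDensity_nonneg (t x : ℝ) : 0 ≤ energyDensity p u t x := by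
  have := h.pos
  unfold energyDensity
  positivity

theorem massLaw : IsBalanceLaw (fun t x => u t x ^ 2) (fun t x => 2 * (u t x * ∂ₜ u t x))
    (fun t x => ∂ₓ u t x ^ 2 - 2 * (u t x * ∂ₓ (∂ₓ u) t x) + 2 * p / (p + 1) * |u t x| ^ (p + 1))
    (massFlux p u) (massPotential u) 0 where
  hasDerivAt_density t x :=
    ((h.smooth.hasDerivAt_time t x).pow 2).congr_deriv (by push_cast; ring)
  hasDerivAt_flux t x := by
    have hp1 : p + 1 ≠ 0 := by linarith [h.pos]
    refine ((((h.smooth.spaceDeriv.hasDerivAt_space t x).pow 2).sub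
      (((h.smooth.hasDerivAt_space t x).mul
        (h.smooth.spaceDeriv.spaceDeriv.hasDerivAt_space t x)).const_mul 2)).add
      ((h.hasDerivAt_abs_rpow_space t x).const_mul (2 * p / (p + 1)))).congr_deriv ?_
    simp only [h.timeDeriv_eq, signedPow, Pi.zero_apply]
    push_cast
    field
  hasDerivAt_potential t x :=
    (((h.smooth.hasDerivAt_space t x).mul
      (h.smooth.spaceDeriv.hasDerivAt_space t x)).const_mul (-2)).congr_deriv
      (by unfold massFlux; ring)
  continuous_density := h.smooth.continuous.pow 2
  continuous_density_deriv := by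
    have := h.smooth.continuous
    have := h.smooth.timeDeriv.continuous
    fun_prop
  continuous_reducedFlux := h.continuous_massFlux
  continuous_potential := by
    have := h.smooth.continuous
    have := h.smooth.spaceDeriv.continuous
    unfold massPotential
    fun_prop
  continuous_source := continuous_const

theorem energyLaw : IsBalanceLaw (energyDensity p u)
    (fun t x => ∂ₓ u t x * ∂ₓ (∂ₜ u) t x + signedPow p (u t x) * ∂ₜ u t x)
    (fun t x => ∂ₓ u t x * ∂ₜ u t x + 1 / 2 * (signedPow p (u t x) - ∂ₓ (∂ₓ u) t x) ^ 2)
    (energyFlux p u) (energyPotential p u) 0 where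
  hasDerivAt_density t x := by
    have hp1 : p + 1 ≠ 0 := by linarith [h.pos]
    refine ((((h.smooth.spaceDeriv.hasDerivAt_time t x).pow 2).div_const 2).add
      ((h.hasDerivAt_abs_rpow_time t x).div_const (p + 1))).congr_deriv ?_
    rw [h.smooth.timeDeriv_spaceDeriv]
    push_cast
    field
  hasDerivAt_flux t x :=
    (((h.smooth.spaceDeriv.hasDerivAt_space t x).mul (h.smooth.timeDeriv.hasDerivAt_space t x)).add
      (((h.hasDerivAt_signedPow_sub t x).pow 2).const_mul (1 / 2))).congr_deriv
      (by simp only [Pi.zero_apply]; push_cast; ring)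
  hasDerivAt_potential t x :=
    ((h.smooth.spaceDeriv.hasDerivAt_space t x).mul (h.hasDerivAt_signedPow_sub t x)).congr_deriv
      (by unfold energyFlux; ring)
  continuous_density := h.continuous_energyDensity
  continuous_density_deriv := by
    have := h.smooth.spaceDeriv.continuous
    have := h.smooth.timeDeriv.continuous
    have := h.smooth.timeDeriv.spaceDeriv.continuous
    have := h.continuous_signedPow
    fun_prop
  continuous_reducedFlux := h.continuous_energyFlux
  continuous_potential := h.continuous_energyPotential
  continuous_source := continuous_const

lemma rapidDecay (t : ℝ) : RapidDecay (u t) := h.schwartz.rapidDecay t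

lemma rapidDecay_spaceDeriv (t : ℝ) : RapidDecay (∂ₓ u t) := h.schwartz.spaceDeriv.rapidDecay t

lemma rapidDecay_spaceDeriv2 (t : ℝ) : RapidDecay (∂ₓ (∂ₓ u) t) :=
  h.schwartz.spaceDeriv.spaceDeriv.rapidDecay t

lemma rapidDecay_abs_rpow_mul (t : ℝ) {f : ℝ → ℝ} (hf : RapidDecay f) :
    RapidDecay fun x => |u t x| ^ (p - 1) * f x := by
  obtain ⟨S, hS⟩ := (h.rapidDecay t).exists_abs_le
  refine hf.bounded_mul (C := S ^ (p - 1)) ?_ fun x => ?_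
  · exact (h.rapidDecay t).continuous.abs.rpow_const fun _ => Or.inr (by linarith [h.one_lt])
  · rw [abs_of_nonneg (by positivity)]
    exact rpow_le_rpow (abs_nonneg _) (hS x) (by linarith [h.one_lt])

lemma rapidDecay_signedPow (t : ℝ) : RapidDecay fun x => signedPow p (u t x) :=
  h.rapidDecay_abs_rpow_mul t (h.rapidDecay t)

lemma rapidDecay_abs_rpow (t : ℝ) : RapidDecay fun x => |u t x| ^ (p + 1) := by
  simpa only [mul_signedPow h.pos] using (h.rapidDecay t).mul (h.rapidDecay_signedPow t)

lemma rapidDecay_energyDensity (t : ℝ) : RapidDecay (energyDensity p u t) := by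
  have hsum := ((h.rapidDecay_spaceDeriv t).sq.const_mul 2⁻¹).add
    ((h.rapidDecay_abs_rpow t).const_mul (p + 1)⁻¹)
  simp only [← div_eq_inv_mul] at hsum
  exact hsum

end IsSolution

end Solution

section Bounded

/-- The mass `∫ u²` at time `t`. -/
noncomputable def mass (u : ℝ → ℝ → ℝ) (t : ℝ) : ℝ := ∫ x, u t x ^ 2

/-- The energy `∫ (u_x² / 2 + |u|^(p+1) / (p+1))` at time `t`. -/
noncomputable def energy (p : ℝ) (u : ℝ → ℝ → ℝ) (t : ℝ) : ℝ := ∫ x, energyDensity p u t x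

/-- A solution whose mass plus energy is at most `N` on the time interval `[a, b]`. -/
structure IsBoundedSolution (p : ℝ) (u : ℝ → ℝ → ℝ) (a b N : ℝ) : Prop extends
    IsSolution p u where
  le : a ≤ b
  mass_add_energy_le : ∀ t ∈ Icc a b, mass u t + energy p u t ≤ N

lemma mass_nonneg (u : ℝ → ℝ → ℝ) (t : ℝ) : 0 ≤ mass u t := integral_nonneg fun _ => sq_nonneg _

namespace IsSolution

variable {p : ℝ} {u : ℝ → ℝ → ℝ} (h : IsSolution p u)
include h

lemma energy_nonneg (t : ℝ) : 0 ≤ energy p u t := integral_nonneg (h.energyDensity_nonneg t)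

lemma sq_spaceDeriv_le (t x : ℝ) : ∂ₓ u t x ^ 2 ≤ 2 * energyDensity p u t x := by
  have hpow : 0 ≤ |u t x| ^ (p + 1) / (p + 1) := by have := h.pos; positivity
  unfold energyDensity
  linarith

lemma abs_rpow_le (t x : ℝ) : |u t x| ^ (p + 1) ≤ (p + 1) * energyDensity p u t x := by
  have hp1 : 0 < p + 1 := by linarith [h.pos]
  rw [← div_le_iff₀' hp1, energyDensity]
  linarith [sq_nonneg (∂ₓ u t x)]

theorem sq_le_mass_add_energy (t x : ℝ) : u t x ^ 2 ≤ 2 * (mass u t + energy p u t) := by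
  have hmass := (h.rapidDecay t).sq.integrable
  have henergy := (h.rapidDecay_energyDensity t).integrable
  have hderiv : Integrable fun y => 2 * (u t y * ∂ₓ u t y) :=
    ((h.rapidDecay t).mul (h.rapidDecay_spaceDeriv t)).integrable.const_mul 2
  have hsq y : HasDerivAt (fun y => u t y ^ 2) (2 * (u t y * ∂ₓ u t y)) y :=
    ((h.smooth.hasDerivAt_space t y).pow 2).congr_deriv (by push_cast; ring)
  have hlim : Tendsto (fun y => u t y ^ 2) atBot (𝓝 0) :=
    tendsto_zero_of_hasDerivAt_of_integrableOn_Iic (a := x) (fun y _ => hsq y)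
      hderiv.integrableOn hmass.integrableOn
  have hsum : Integrable fun y => 2 * (u t y ^ 2 + energyDensity p u t y) :=
    (hmass.add henergy).const_mul 2
  calc u t x ^ 2 = ∫ y in Iic x, 2 * (u t y * ∂ₓ u t y) := by
        rw [integral_Iic_of_hasDerivAt_of_tendsto' (fun y _ => hsq y) hderiv.integrableOn hlim,
          sub_zero]
    _ ≤ ∫ y in Iic x, 2 * (u t y ^ 2 + energyDensity p u t y) :=
        integral_mono hderiv.integrableOn hsum.integrableOn fun y => by
          linarith [h.sq_spaceDeriv_le t y, sq_nonneg (u t y - ∂ₓ u t y), sq_nonneg (u t y)]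
    _ ≤ ∫ y, 2 * (u t y ^ 2 + energyDensity p u t y) :=
        setIntegral_le_integral hsum (ae_of_all _ fun y => by
          have := h.energyDensity_nonneg t y
          simp only [Pi.zero_apply]
          positivity)
    _ = 2 * (mass u t + energy p u t) := by
        rw [integral_const_mul, integral_add hmass henergy, mass, energy]

end IsSolution

namespace IsBoundedSolution

variable {p : ℝ} {u : ℝ → ℝ → ℝ} {a b N : ℝ} (h : IsBoundedSolution p u a b N)
include h

lemma abs_apply_le {t : ℝ} (ht : t ∈ Icc a b) (x : ℝ) : |u t x| ≤ √(2 * N) :=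
  abs_le_sqrt (by linarith [h.sq_le_mass_add_energy t x, h.mass_add_energy_le t ht])

lemma integrable_sq : Integrable (fun q : ℝ × ℝ => u q.1 q.2 ^ 2) (slab a b) :=
  integrable_slab_of_integral_le (f := fun t x => u t x ^ 2) (N := N) (h.smooth.continuous.pow 2)
    (fun t x => sq_nonneg _) (fun t _ => (h.rapidDecay t).sq.integrable)
    fun t ht => by
      have : mass u t ≤ N := by linarith [h.mass_add_energy_le t ht, h.energy_nonneg t]
      exact this

lemma integrable_energyDensity :
    Integrable (fun q : ℝ × ℝ => energyDensity p u q.1 q.2) (slab a b) :=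
  integrable_slab_of_integral_le (N := N) h.continuous_energyDensity h.energyDensity_nonneg
    (fun t _ => (h.rapidDecay_energyDensity t).integrable)
    fun t ht => by
      have : energy p u t ≤ N := by linarith [h.mass_add_energy_le t ht, mass_nonneg u t]
      exact this

lemma integrable_sq_spaceDeriv :
    Integrable (fun q : ℝ × ℝ => ∂ₓ u q.1 q.2 ^ 2) (slab a b) :=
  (h.integrable_energyDensity.const_mul 2).mono'
    (h.smooth.spaceDeriv.continuous.pow 2).aestronglyMeasurable (ae_of_all _ fun q => by
      rw [norm_eq_abs, abs_of_nonneg (sq_nonneg _)]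
      exact h.sq_spaceDeriv_le q.1 q.2)

lemma integrable_abs_rpow :
    Integrable (fun q : ℝ × ℝ => |u q.1 q.2| ^ (p + 1)) (slab a b) :=
  (h.integrable_energyDensity.const_mul (p + 1)).mono'
    h.continuous_abs_rpow.aestronglyMeasurable (ae_of_all _ fun q => by
      rw [norm_eq_abs, abs_of_nonneg (by positivity)]
      exact h.abs_rpow_le q.1 q.2)

lemma integrable_sq_signedPow :
    Integrable (fun q : ℝ × ℝ => signedPow p (u q.1 q.2) ^ 2) (slab a b) :=
  (h.integrable_sq.const_mul ((√(2 * N) ^ (p - 1)) ^ 2)).mono'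
    (h.continuous_signedPow.pow 2).aestronglyMeasurable (ae_slab_of_forall_mem fun t ht x => by
      rw [norm_eq_abs, abs_of_nonneg (sq_nonneg _)]
      exact sq_signedPow_le h.one_lt.le (h.abs_apply_le ht x))

lemma integrable_massFlux : Integrable (fun q : ℝ × ℝ => massFlux p u q.1 q.2) (slab a b) :=
  ((h.integrable_sq_spaceDeriv.const_mul 3).add
    (h.integrable_abs_rpow.const_mul (2 * p / (p + 1)))).neg

lemma integrable_massPotential :
    Integrable (fun q : ℝ × ℝ => massPotential u q.1 q.2) (slab a b) :=
  (integrable_mul_of_integrable_sq h.smooth.continuous.aestronglyMeasurable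
    h.smooth.spaceDeriv.continuous.aestronglyMeasurable h.integrable_sq
    h.integrable_sq_spaceDeriv).const_mul (-2)

end IsBoundedSolution

lemma isWeight_one : IsWeight (fun _ => 1) (fun _ => 0) (fun _ => 0) (fun _ => 1) where
  hasDerivAt x := hasDerivAt_const x 1
  hasDerivAt' x := hasDerivAt_const x 0
  continuous'' := continuous_const
  abs_le x := by simp
  abs_deriv_le _ := by simp
  abs_deriv2_le _ := by simp

lemma isWeight_id : IsWeight (fun x => x) (fun _ => 1) (fun _ => 0) (fun _ => 1) where
  hasDerivAt := hasDerivAt_id'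
  hasDerivAt' x := hasDerivAt_const x 1
  continuous'' := continuous_const
  abs_le x := by simp
  abs_deriv_le _ := by simp
  abs_deriv2_le _ := by simp

theorem IsBoundedSolution.mass_eq {p : ℝ} {u : ℝ → ℝ → ℝ} {a b N : ℝ}
    (h : IsBoundedSolution p u a b N) : mass u b = mass u a := by
  have hlaw := h.massLaw.integral_slab h.le isWeight_one (by simpa using h.integrable_massFlux)
    (by simpa using h.integrable_massPotential) (by simp)
    (by simpa using (h.rapidDecay a).sq.integrable) (by simpa using (h.rapidDecay b).sq.integrable)
  simp only [one_mul, zero_mul, Pi.zero_apply, mul_zero, add_zero, integral_zero] at hlaw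
  exact sub_eq_zero.1 hlaw

end Bounded

section KatoSmoothing

/-- The weight of Kato's smoothing estimate: its derivative increases to `1 + x²` as `ε → 0` and is
bounded for each `ε > 0`. -/
noncomputable def katoWeight (ε x : ℝ) : ℝ := x + x ^ 3 / (3 * (1 + ε * x ^ 2))

/-- The derivative of `katoWeight`. -/
noncomputable def katoWeight' (ε x : ℝ) : ℝ :=
  1 + x ^ 2 * (3 + ε * x ^ 2) / (3 * (1 + ε * x ^ 2) ^ 2)

/-- The second derivative of `katoWeight`. -/
noncomputable def katoWeight'' (ε x : ℝ) : ℝ :=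
  2 * x * (3 - ε * x ^ 2) / (3 * (1 + ε * x ^ 2) ^ 3)

section

variable {ε x : ℝ} (hε : 0 < ε)
include hε

lemma one_le_katoWeight' : 1 ≤ katoWeight' ε x := by
  unfold katoWeight'
  have : 0 ≤ x ^ 2 * (3 + ε * x ^ 2) / (3 * (1 + ε * x ^ 2) ^ 2) := by positivity
  linarith

lemma katoWeight'_le : katoWeight' ε x ≤ 1 + 1 / ε := by
  have hquot : x ^ 2 * (3 + ε * x ^ 2) / (3 * (1 + ε * x ^ 2) ^ 2) ≤ 1 / ε := by
    rw [div_le_div_iff₀ (by positivity) hε]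
    nlinarith [sq_nonneg (ε * x ^ 2), mul_nonneg hε.le (sq_nonneg x)]
  unfold katoWeight'
  linarith

lemma sq_katoWeight''_le : katoWeight'' ε x ^ 2 ≤ 4 * katoWeight' ε x := by
  have hy : 0 ≤ ε * x ^ 2 := by positivity
  have hratio : ((3 - ε * x ^ 2) / (3 * (1 + ε * x ^ 2))) ^ 2 ≤ 1 := by
    rw [div_pow, div_le_one (by positivity)]
    exact sq_le_sq' (by linarith) (by linarith)
  calc katoWeight'' ε x ^ 2
      = 4 * (x ^ 2 / (1 + ε * x ^ 2) ^ 4 * ((3 - ε * x ^ 2) / (3 * (1 + ε * x ^ 2))) ^ 2) := by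
        unfold katoWeight''
        field
    _ ≤ 4 * (x ^ 2 / (1 + ε * x ^ 2) ^ 2 * 1) := by
        gcongr
        · linarith
        · norm_num
    _ ≤ 4 * (1 + x ^ 2 / (1 + ε * x ^ 2) ^ 2 * ((3 + ε * x ^ 2) / 3)) := by
        gcongr
        have : x ^ 2 / (1 + ε * x ^ 2) ^ 2 * 1
            ≤ x ^ 2 / (1 + ε * x ^ 2) ^ 2 * ((3 + ε * x ^ 2) / 3) := by
          gcongr
          linarith
        linarith
    _ = 4 * katoWeight' ε x := by
        unfold katoWeight'
        field

lemma abs_katoWeight''_le : |katoWeight'' ε x| ≤ 2 * katoWeight' ε x := by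
  have h1 := one_le_katoWeight' hε (x := x)
  refine abs_le_of_sq_le_sq ?_ (by linarith)
  nlinarith [sq_katoWeight''_le hε (x := x)]

lemma abs_katoWeight : |katoWeight ε x| = |x| * (1 + x ^ 2 / (3 * (1 + ε * x ^ 2))) := by
  rw [show katoWeight ε x = x * (1 + x ^ 2 / (3 * (1 + ε * x ^ 2))) by unfold katoWeight; ring,
    abs_mul, abs_of_nonneg (a := 1 + _) (by positivity)]

lemma abs_katoWeight_le_cube : |katoWeight ε x| ≤ (1 + |x|) ^ 3 := by
  calc |katoWeight ε x| = |x| * (1 + x ^ 2 / (3 * (1 + ε * x ^ 2))) := abs_katoWeight hε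
    _ ≤ |x| * (1 + x ^ 2) := by
        gcongr
        exact div_le_self (sq_nonneg x) (by linarith [mul_nonneg hε.le (sq_nonneg x)])
    _ ≤ (1 + |x|) ^ 3 := by
        rw [← sq_abs x]
        nlinarith [abs_nonneg x]

lemma abs_katoWeight_le : |katoWeight ε x| ≤ (1 + 1 / ε) * |x| := by
  have hquot : x ^ 2 / (3 * (1 + ε * x ^ 2)) ≤ 1 / ε := by
    rw [div_le_div_iff₀ (by positivity) hε]
    linarith [mul_nonneg hε.le (sq_nonneg x)]
  rw [abs_katoWeight hε, mul_comm]
  gcongr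

lemma isWeight_katoWeight : IsWeight (katoWeight ε) (katoWeight' ε) (katoWeight'' ε)
    (fun _ => 2 * (1 + 1 / ε)) where
  hasDerivAt x := by
    refine ((hasDerivAt_id' x).add ((hasDerivAt_pow 3 x).div
      ((((hasDerivAt_pow 2 x).const_mul ε).const_add 1).const_mul 3)
      (by positivity))).congr_deriv ?_
    unfold katoWeight'
    push_cast
    field
  hasDerivAt' x := by
    have hnum' : HasDerivAt (fun y => y ^ 2 * (3 + ε * y ^ 2))
        (2 * x * (3 + ε * x ^ 2) + x ^ 2 * (ε * (2 * x))) x :=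
      ((hasDerivAt_pow 2 x).mul (((hasDerivAt_pow 2 x).const_mul ε).const_add 3)).congr_deriv
        (by norm_num)
    have hden' : HasDerivAt (fun y => 3 * (1 + ε * y ^ 2) ^ 2)
        (3 * (2 * (1 + ε * x ^ 2) * (ε * (2 * x)))) x :=
      (((((hasDerivAt_pow 2 x).const_mul ε).const_add 1).pow 2).const_mul 3).congr_deriv
        (by norm_num)
    refine ((hnum'.div hden' (by positivity)).const_add 1).congr_deriv ?_
    unfold katoWeight''
    field
  continuous'' := by
    unfold katoWeight''
    exact Continuous.div (by fun_prop) (by fun_prop) fun x =>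
      have : 0 < 1 + ε * x ^ 2 := by positivity
      by positivity
  abs_le x := by
    have := abs_katoWeight_le hε (x := x)
    have : 0 < 1 / ε := by positivity
    nlinarith [abs_nonneg x]
  abs_deriv_le x := by
    have := one_le_katoWeight' hε (x := x)
    rw [abs_of_nonneg (by linarith)]
    linarith [katoWeight'_le hε (x := x)]
  abs_deriv2_le x := by linarith [katoWeight'_le hε (x := x), abs_katoWeight''_le hε (x := x)]

end

lemma tendsto_katoWeight' (x : ℝ) :
    Tendsto (fun n : ℕ => katoWeight' (1 / ((n : ℝ) + 1)) x) atTop (𝓝 (1 + x ^ 2)) := by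
  have hcont : ContinuousAt (fun ε => katoWeight' ε x) 0 := by
    unfold katoWeight'
    exact continuousAt_const.add (ContinuousAt.div (by fun_prop) (by fun_prop) (by simp))
  have hlim := hcont.tendsto.comp (tendsto_one_div_add_atTop_nhds_zero_nat (𝕜 := ℝ))
  rwa [show katoWeight' 0 x = 1 + x ^ 2 by simp [katoWeight']] at hlim

variable {p : ℝ} {u : ℝ → ℝ → ℝ} {a b N c : ℝ} {φ φ' φ'' : ℝ → ℝ}

lemma IsSolution.weight_mul_le (h : IsSolution p u) (hφ' : ∀ x, 0 ≤ φ' x)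
    (hφ'' : ∀ x, φ'' x ^ 2 ≤ 4 * φ' x) (t x : ℝ) :
    φ' x * (∂ₓ u t x ^ 2 + |u t x| ^ (p + 1))
      ≤ 4 * u t x ^ 2 - (φ' x * massFlux p u t x + φ'' x * massPotential u t x) := by
  have hP : φ' x * |u t x| ^ (p + 1) ≤ 2 * p / (p + 1) * (φ' x * |u t x| ^ (p + 1)) := by
    refine le_mul_of_one_le_left (mul_nonneg (hφ' x) (by positivity)) ?_
    rw [le_div_iff₀ (by linarith [h.pos])]
    linarith [h.one_lt]
  have hcross : -(2 * (φ'' x * (u t x * ∂ₓ u t x))) ≤ φ' x * ∂ₓ u t x ^ 2 + 4 * u t x ^ 2 := by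
    have := mul_le_mul_of_nonneg_right (hφ'' x) (sq_nonneg (∂ₓ u t x))
    nlinarith [sq_nonneg (φ'' x * ∂ₓ u t x + 4 * u t x)]
  have := mul_nonneg (hφ' x) (sq_nonneg (∂ₓ u t x))
  unfold massFlux massPotential
  linarith

lemma RapidDecay.integrable_and_abs_integral_mul_sq_le {f : ℝ → ℝ} (hf : RapidDecay f)
    (hφ : Continuous φ) (hφ3 : ∀ x, |φ x| ≤ (1 + |x|) ^ 3) :
    Integrable (fun x => φ x * f x ^ 2) ∧
      |∫ x, φ x * f x ^ 2| ≤ ∫ x, (1 + |x|) ^ 3 * f x ^ 2 := by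
  have hcube : Integrable fun x => (1 + |x|) ^ 3 * f x ^ 2 :=
    (hf.sq.of_abs_le (C := 1) (k := 3) (by have := hf.continuous; fun_prop) (fun x => by
      rw [abs_mul, one_mul, abs_of_nonneg (by positivity)]) zero_le_one).integrable
  have hφf : Integrable fun x => φ x * f x ^ 2 :=
    (hf.sq.of_abs_le (C := 1) (k := 3) (by have := hf.continuous; fun_prop) (fun x => by
      rw [abs_mul, one_mul]
      gcongr
      exact hφ3 x) zero_le_one).integrable
  refine ⟨hφf, abs_integral_le_integral_abs.trans (integral_mono hφf.abs hcube fun x => ?_)⟩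
  simp only [abs_mul, abs_of_nonneg (sq_nonneg (f x))]
  gcongr
  exact hφ3 x

lemma IsBoundedSolution.integral_weight_mul_le (h : IsBoundedSolution p u a b N)
    (hφ : IsWeight φ φ' φ'' fun _ => c) (hφ3 : ∀ x, |φ x| ≤ (1 + |x|) ^ 3)
    (hφ' : ∀ x, 0 ≤ φ' x) (hφ'' : ∀ x, φ'' x ^ 2 ≤ 4 * φ' x) :
    Integrable (fun q : ℝ × ℝ => φ' q.2 * (∂ₓ u q.1 q.2 ^ 2 + |u q.1 q.2| ^ (p + 1)))
        (slab a b) ∧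
      ∫ q : ℝ × ℝ, φ' q.2 * (∂ₓ u q.1 q.2 ^ 2 + |u q.1 q.2| ^ (p + 1)) ∂slab a b ≤
        (∫ x, (1 + |x|) ^ 3 * u a x ^ 2) + (∫ x, (1 + |x|) ^ 3 * u b x ^ 2)
          + 4 * ∫ q, u q.1 q.2 ^ 2 ∂slab a b := by
  have hcont' := hφ.continuous'
  have hcont'' := hφ.continuous''
  have hslice t := (h.rapidDecay t).integrable_and_abs_integral_mul_sq_le hφ.continuous hφ3
  have hflux : Integrable (fun q : ℝ × ℝ =>
      φ' q.2 * massFlux p u q.1 q.2 + φ'' q.2 * massPotential u q.1 q.2) (slab a b) :=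
    (h.integrable_massFlux.bdd_mul (c := c) (by fun_prop)
      (ae_of_all _ fun q => hφ.abs_deriv_le q.2)).add
    (h.integrable_massPotential.bdd_mul (c := c) (by fun_prop)
      (ae_of_all _ fun q => hφ.abs_deriv2_le q.2))
  have hlaw := h.massLaw.integral_slab h.le hφ (h.integrable_massFlux.const_mul c)
    (h.integrable_massPotential.const_mul c) (by simp) (hslice a).1 (hslice b).1
  simp only [Pi.zero_apply, mul_zero, add_zero] at hlaw
  have hint : Integrable (fun q : ℝ × ℝ => φ' q.2 * (∂ₓ u q.1 q.2 ^ 2 + |u q.1 q.2| ^ (p + 1)))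
      (slab a b) :=
    (h.integrable_sq_spaceDeriv.add h.integrable_abs_rpow).bdd_mul (c := c) (by fun_prop)
      (ae_of_all _ fun q => hφ.abs_deriv_le q.2)
  refine ⟨hint, ?_⟩
  calc ∫ q : ℝ × ℝ, φ' q.2 * (∂ₓ u q.1 q.2 ^ 2 + |u q.1 q.2| ^ (p + 1)) ∂slab a b
      ≤ ∫ q : ℝ × ℝ, (4 * u q.1 q.2 ^ 2 - (φ' q.2 * massFlux p u q.1 q.2
          + φ'' q.2 * massPotential u q.1 q.2)) ∂slab a b :=
        integral_mono hint ((h.integrable_sq.const_mul 4).sub hflux)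
          fun q => h.weight_mul_le hφ' hφ'' q.1 q.2
    _ = 4 * (∫ q, u q.1 q.2 ^ 2 ∂slab a b)
          - ((∫ x, φ x * u b x ^ 2) - ∫ x, φ x * u a x ^ 2) := by
        rw [integral_sub (h.integrable_sq.const_mul 4) hflux, integral_const_mul, hlaw]
    _ ≤ _ := by
        have hua := abs_le.1 (hslice a).2
        have hub := abs_le.1 (hslice b).2
        linarith

theorem IsBoundedSolution.integrable_one_add_sq_mul (h : IsBoundedSolution p u a b N) :
    Integrable (fun q : ℝ × ℝ => (1 + q.2 ^ 2) * (∂ₓ u q.1 q.2 ^ 2 + |u q.1 q.2| ^ (p + 1)))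
      (slab a b) := by
  have hε (n : ℕ) : (0 : ℝ) < 1 / ((n : ℝ) + 1) := by positivity
  have hbound (n : ℕ) := h.integral_weight_mul_le (isWeight_katoWeight (hε n))
    (fun x => abs_katoWeight_le_cube (hε n))
    (fun x => zero_le_one.trans (one_le_katoWeight' (hε n))) fun x => sq_katoWeight''_le (hε n)
  refine (integrable_and_integral_le_of_tendsto (by positivity) (fun n => (hbound n).1)
    (fun n q => ?_) (fun n => (hbound n).2) fun q => ?_).1
  · exact mul_nonneg (zero_le_one.trans (one_le_katoWeight' (hε n))) (by positivity)
  · exact (tendsto_katoWeight' q.2).mul_const _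

end KatoSmoothing

section DifferenceQuotient

lemma sq_slope_le_integral {f f' : ℝ → ℝ} {δ : ℝ} (hf : ∀ x, HasDerivAt f (f' x) x)
    (hf' : Continuous f') (hδ : 0 < δ) (x : ℝ) :
    ((f (x + δ) - f x) / δ) ^ 2 ≤ ∫ s in Ioc (0 : ℝ) 1, f' (x + s * δ) ^ 2 := by
  have hint {g : ℝ → ℝ} (hg : Continuous g) : IntegrableOn g (Ioc 0 1) :=
    hg.integrableOn_Icc.mono_set Ioc_subset_Icc_self
  have mean : (f (x + δ) - f x) / δ = ∫ s in Ioc (0 : ℝ) 1, f' (x + s * δ) * 1 := by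
    have hderiv s : HasDerivAt (fun s => f (x + s * δ) / δ) (f' (x + s * δ) * 1) s := by
      have hline : HasDerivAt (fun s : ℝ => x + s * δ) (1 * δ) s :=
        ((hasDerivAt_id' s).mul_const δ).const_add x
      exact (((hf (x + s * δ)).comp s hline).div_const δ).congr_deriv (by field)
    rw [← intervalIntegral.integral_of_le zero_le_one,
      intervalIntegral.integral_eq_sub_of_hasDerivAt (fun s _ => hderiv s)
        (Continuous.intervalIntegrable (by fun_prop) _ _)]
    simp [sub_div]
  calc ((f (x + δ) - f x) / δ) ^ 2
      = (∫ s in Ioc (0 : ℝ) 1, f' (x + s * δ) * 1) ^ 2 := by rw [mean]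
    _ ≤ (∫ s in Ioc (0 : ℝ) 1, f' (x + s * δ) ^ 2) * ∫ _ in Ioc (0 : ℝ) 1, (1 : ℝ) ^ 2 :=
        sq_integral_mul_le (Continuous.aestronglyMeasurable (by fun_prop))
          aestronglyMeasurable_const (hint (by fun_prop)) (hint (by fun_prop))
    _ = ∫ s in Ioc (0 : ℝ) 1, f' (x + s * δ) ^ 2 := by simp

lemma lintegral_one_add_sq_mul_sq_comp_add_le {f : ℝ → ℝ} {η : ℝ} (hf : Continuous f)
    (hη : |η| ≤ 1) : ∫⁻ x, ENNReal.ofReal ((1 + x ^ 2) * f (x + η) ^ 2) ≤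
      ENNReal.ofReal 3 * ∫⁻ x, ENNReal.ofReal ((1 + x ^ 2) * f x ^ 2) := by
  rw [← lintegral_add_right_eq_self (fun x => ENNReal.ofReal ((1 + x ^ 2) * f x ^ 2)) η,
    ← lintegral_const_mul _ (by fun_prop)]
  refine lintegral_mono fun x => ?_
  rw [← ENNReal.ofReal_mul (by norm_num), ← mul_assoc]
  have := sq_le_one_iff_abs_le_one η |>.2 hη
  gcongr
  linarith [sq_nonneg (x + 2 * η), sq_nonneg (x + η)]

lemma lintegral_one_add_sq_mul_sq_slope_le {f f' : ℝ → ℝ} {δ : ℝ}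
    (hf : ∀ x, HasDerivAt f (f' x) x) (hf' : Continuous f') (hδ : 0 < δ) (hδ1 : δ ≤ 1) :
    ∫⁻ x, ENNReal.ofReal ((1 + x ^ 2) * ((f (x + δ) - f x) / δ) ^ 2) ≤
      ENNReal.ofReal 3 * ∫⁻ x, ENNReal.ofReal ((1 + x ^ 2) * f' x ^ 2) := by
  have hmeas : Measurable (fun q : ℝ × ℝ =>
      ENNReal.ofReal ((1 + q.1 ^ 2) * f' (q.1 + q.2 * δ) ^ 2)) := by fun_prop
  calc ∫⁻ x, ENNReal.ofReal ((1 + x ^ 2) * ((f (x + δ) - f x) / δ) ^ 2)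
      ≤ ∫⁻ x, ∫⁻ s in Ioc (0 : ℝ) 1, ENNReal.ofReal ((1 + x ^ 2) * f' (x + s * δ) ^ 2) := by
        refine lintegral_mono fun x => ?_
        rw [← ofReal_integral_eq_lintegral_ofReal
          ((Continuous.integrableOn_Icc (by fun_prop)).mono_set Ioc_subset_Icc_self)
          (ae_of_all _ fun s => by simp only [Pi.zero_apply]; positivity), integral_const_mul]
        gcongr
        exact sq_slope_le_integral hf hf' hδ x
    _ = ∫⁻ s in Ioc (0 : ℝ) 1, ∫⁻ x, ENNReal.ofReal ((1 + x ^ 2) * f' (x + s * δ) ^ 2) :=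
        lintegral_lintegral_swap hmeas.aemeasurable
    _ ≤ ∫⁻ _ in Ioc (0 : ℝ) 1,
          ENNReal.ofReal 3 * ∫⁻ x, ENNReal.ofReal ((1 + x ^ 2) * f' x ^ 2) := by
        refine setLIntegral_mono' measurableSet_Ioc fun s hs => ?_
        refine lintegral_one_add_sq_mul_sq_comp_add_le hf' ?_
        rw [abs_of_nonneg (mul_nonneg hs.1.le hδ.le)]
        exact mul_le_one₀ hs.2 hδ.le hδ1
    _ = ENNReal.ofReal 3 * ∫⁻ x, ENNReal.ofReal ((1 + x ^ 2) * f' x ^ 2) := by simp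

/-- The difference quotient in space with step `δ`. -/
noncomputable def diffQuot (δ : ℝ) (f : ℝ → ℝ → ℝ) (t x : ℝ) : ℝ := (f t (x + δ) - f t x) / δ

variable {f : ℝ → ℝ → ℝ} {a b : ℝ}

lemma hasDerivAt_diffQuot {f' : ℝ → ℝ → ℝ} (hf : ∀ t x, HasDerivAt (f t) (f' t x) x)
    (δ t x : ℝ) : HasDerivAt (diffQuot δ f t) (diffQuot δ f' t x) x :=
  (((hf t (x + δ)).comp_add_const x δ).sub (hf t x)).div_const δ

lemma continuous_diffQuot (hf : Continuous fun q : ℝ × ℝ => f q.1 q.2) (δ : ℝ) :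
    Continuous fun q : ℝ × ℝ => diffQuot δ f q.1 q.2 := by
  unfold diffQuot
  fun_prop

lemma isSmooth_diffQuot (hf : IsSmooth f) (δ : ℝ) : IsSmooth (diffQuot δ f) :=
  ((ContDiff.comp hf (f := fun q : ℝ × ℝ => (q.1, q.2 + δ)) (by fun_prop)).sub hf).div_const δ

namespace IsSmooth

lemma spaceDeriv_diffQuot (hf : IsSmooth f) (δ : ℝ) :
    ∂ₓ (diffQuot δ f) = diffQuot δ (∂ₓ f) :=
  funext fun t => funext fun x => (hasDerivAt_diffQuot hf.hasDerivAt_space δ t x).deriv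

lemma timeDeriv_diffQuot (hf : IsSmooth f) (δ : ℝ) :
    ∂ₜ (diffQuot δ f) = diffQuot δ (∂ₜ f) :=
  funext fun t => funext fun x =>
    (((hf.hasDerivAt_time t (x + δ)).sub (hf.hasDerivAt_time t x)).div_const δ).deriv

variable {δ : ℝ}

lemma integral_one_add_sq_mul_sq_diffQuot_le (hf : IsSmooth f) (hδ : 0 < δ) (hδ1 : δ ≤ 1) {t : ℝ}
    (hint : Integrable fun x => (1 + x ^ 2) * ∂ₓ f t x ^ 2) :
    Integrable (fun x => (1 + x ^ 2) * diffQuot δ f t x ^ 2) ∧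
      ∫ x, (1 + x ^ 2) * diffQuot δ f t x ^ 2 ≤ 3 * ∫ x, (1 + x ^ 2) * ∂ₓ f t x ^ 2 := by
  have hcont := (isSmooth_diffQuot hf δ).continuous_slice t
  refine integrable_and_integral_le_mul_of_lintegral_le
    (Continuous.aestronglyMeasurable (by fun_prop)) (fun x => by positivity) (by norm_num) hint
    (fun x => by positivity) ?_
  exact lintegral_one_add_sq_mul_sq_slope_le (hf.hasDerivAt_space t)
    (hf.spaceDeriv.continuous_slice t) hδ hδ1

lemma integral_slab_one_add_sq_mul_sq_diffQuot_le (hf : IsSmooth f) (hδ : 0 < δ) (hδ1 : δ ≤ 1)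
    (hint : Integrable (fun q : ℝ × ℝ => (1 + q.2 ^ 2) * ∂ₓ f q.1 q.2 ^ 2) (slab a b)) :
    Integrable (fun q : ℝ × ℝ => (1 + q.2 ^ 2) * diffQuot δ f q.1 q.2 ^ 2) (slab a b) ∧
      ∫ q : ℝ × ℝ, (1 + q.2 ^ 2) * diffQuot δ f q.1 q.2 ^ 2 ∂slab a b ≤
        3 * ∫ q : ℝ × ℝ, (1 + q.2 ^ 2) * ∂ₓ f q.1 q.2 ^ 2 ∂slab a b := by
  have hlintegral {g : ℝ → ℝ → ℝ} (hg : Continuous fun q : ℝ × ℝ => g q.1 q.2) :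
      ∫⁻ q : ℝ × ℝ, ENNReal.ofReal ((1 + q.2 ^ 2) * g q.1 q.2 ^ 2) ∂slab a b =
        ∫⁻ t in Ioc a b, ∫⁻ x, ENNReal.ofReal ((1 + x ^ 2) * g t x ^ 2) := by
    have hmeas : Measurable fun q : ℝ × ℝ => ENNReal.ofReal ((1 + q.2 ^ 2) * g q.1 q.2 ^ 2) :=
      (Continuous.measurable (by fun_prop)).ennreal_ofReal
    exact lintegral_prod _ hmeas.aemeasurable
  have hquot := (isSmooth_diffQuot hf δ).continuous
  refine integrable_and_integral_le_mul_of_lintegral_le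
    (Continuous.aestronglyMeasurable (by fun_prop)) (fun x => by positivity) (by norm_num) hint
    (fun x => by positivity) ?_
  rw [hlintegral hquot, hlintegral hf.spaceDeriv.continuous,
    ← lintegral_const_mul' _ _ ENNReal.ofReal_ne_top]
  exact lintegral_mono fun t => lintegral_one_add_sq_mul_sq_slope_le (hf.hasDerivAt_space t)
    (hf.spaceDeriv.continuous_slice t) hδ hδ1

end IsSmooth

lemma integrable_sq_diffQuot (hf : Continuous fun q : ℝ × ℝ => f q.1 q.2) (δ : ℝ)
    (hint : Integrable (fun q : ℝ × ℝ => f q.1 q.2 ^ 2) (slab a b)) :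
    Integrable (fun q : ℝ × ℝ => diffQuot δ f q.1 q.2 ^ 2) (slab a b) := by
  have htranslate : MeasurePreserving (fun q : ℝ × ℝ => (q.1, q.2 + δ)) (slab a b) (slab a b) :=
    (MeasurePreserving.id _).prod (measurePreserving_add_right volume δ)
  have hshift : Integrable (fun q : ℝ × ℝ => f q.1 (q.2 + δ) ^ 2) (slab a b) :=
    htranslate.integrable_comp_of_integrable hint
  refine ((hshift.add hint).const_mul (2 / δ ^ 2)).mono'
    ((continuous_diffQuot hf δ).pow 2).aestronglyMeasurable (ae_of_all _ fun q => ?_)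
  rw [norm_eq_abs, abs_of_nonneg (sq_nonneg _), Pi.add_apply, diffQuot, div_pow,
    div_mul_eq_mul_div]
  gcongr
  linarith [sq_nonneg (f q.1 (q.2 + δ) + f q.1 q.2)]

lemma IsSmooth.tendsto_diffQuot (hf : IsSmooth f) (t x : ℝ) :
    Tendsto (fun n : ℕ => diffQuot (1 / ((n : ℝ) + 1)) f t x) atTop (𝓝 (∂ₓ f t x)) := by
  have hstep : Tendsto (fun n : ℕ => 1 / ((n : ℝ) + 1)) atTop (𝓝[>] 0) :=
    tendsto_nhdsWithin_iff.2 ⟨tendsto_one_div_add_atTop_nhds_zero_nat,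
      Eventually.of_forall fun n => (Nat.one_div_pos_of_nat : (0 : ℝ) < _)⟩
  refine ((hf.hasDerivAt_space t x).tendsto_slope_zero_right.comp hstep).congr fun n => ?_
  simp only [Function.comp, diffQuot, smul_eq_mul]
  rw [div_eq_inv_mul (f t _ - _)]

end DifferenceQuotient

section ForcedAiry

variable {v g : ℝ → ℝ → ℝ} {a b : ℝ}

lemma isBalanceLaw_sq_of_forcedAiry (hv : IsSmooth v)
    (hg_cont : Continuous fun q : ℝ × ℝ => g q.1 q.2)
    (hg : ∀ t x, HasDerivAt (g t) (∂ₜ v t x + ∂ₓ (∂ₓ (∂ₓ v)) t x) x) :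
    IsBalanceLaw (fun t x => v t x ^ 2) (fun t x => 2 * (v t x * ∂ₜ v t x))
      (fun t x => ∂ₓ v t x ^ 2 - 2 * (v t x * ∂ₓ (∂ₓ v) t x) + 2 * (v t x * g t x))
      (fun t x => -(3 * ∂ₓ v t x ^ 2 + 2 * (v t x * g t x)))
      (fun t x => -2 * (v t x * ∂ₓ v t x)) (fun t x => -2 * (∂ₓ v t x * g t x)) where
  hasDerivAt_density t x := ((hv.hasDerivAt_time t x).pow 2).congr_deriv (by push_cast; ring)
  hasDerivAt_flux t x :=
    ((((hv.spaceDeriv.hasDerivAt_space t x).pow 2).sub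
      (((hv.hasDerivAt_space t x).mul (hv.spaceDeriv.spaceDeriv.hasDerivAt_space t x)).const_mul
        2)).add (((hv.hasDerivAt_space t x).mul (hg t x)).const_mul 2)).congr_deriv
      (by push_cast; ring)
  hasDerivAt_potential t x :=
    (((hv.hasDerivAt_space t x).mul (hv.spaceDeriv.hasDerivAt_space t x)).const_mul
      (-2)).congr_deriv (by ring)
  continuous_density := hv.continuous.pow 2
  continuous_density_deriv := by
    have := hv.continuous
    have := hv.timeDeriv.continuous
    fun_prop
  continuous_reducedFlux := by
    have := hv.continuous
    have := hv.spaceDeriv.continuous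
    fun_prop
  continuous_potential := by
    have := hv.continuous
    have := hv.spaceDeriv.continuous
    fun_prop
  continuous_source := by
    have := hv.spaceDeriv.continuous
    fun_prop

lemma integrable_id_mul_sq {f : ℝ → ℝ} (hf : Continuous f)
    (hint : Integrable fun x => (1 + x ^ 2) * f x ^ 2) :
    Integrable (fun x => x * f x ^ 2) ∧ |∫ x, x * f x ^ 2| ≤ ∫ x, (1 + x ^ 2) * f x ^ 2 := by
  have hle x : |x * f x ^ 2| ≤ (1 + x ^ 2) * f x ^ 2 := by
    rw [abs_mul, abs_of_nonneg (sq_nonneg (f x))]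
    gcongr
    exact abs_le.2 ⟨by nlinarith [sq_nonneg (x + 1)], by nlinarith [sq_nonneg (x - 1)]⟩
  have hid : Integrable fun x => x * f x ^ 2 :=
    hint.mono' (Continuous.aestronglyMeasurable (by fun_prop)) (ae_of_all _ hle)
  exact ⟨hid, abs_integral_le_integral_abs.trans (integral_mono hid.abs hint hle)⟩

/-- Kato smoothing for the Airy equation `v_t + v_xxx = g_x`, with the weight `x`. -/
theorem integral_sq_spaceDeriv_le_of_forcedAiry (hab : a ≤ b) (hv : IsSmooth v)
    (hg_cont : Continuous fun q : ℝ × ℝ => g q.1 q.2)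
    (hg : ∀ t x, HasDerivAt (g t) (∂ₜ v t x + ∂ₓ (∂ₓ (∂ₓ v)) t x) x)
    (hva : Integrable fun x => (1 + x ^ 2) * v a x ^ 2)
    (hvb : Integrable fun x => (1 + x ^ 2) * v b x ^ 2)
    (hv2 : Integrable (fun q : ℝ × ℝ => v q.1 q.2 ^ 2) (slab a b))
    (hvx : Integrable (fun q : ℝ × ℝ => ∂ₓ v q.1 q.2 ^ 2) (slab a b))
    (hg2 : Integrable (fun q : ℝ × ℝ => (1 + q.2 ^ 2) * g q.1 q.2 ^ 2) (slab a b)) :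
    2 * ∫ q, ∂ₓ v q.1 q.2 ^ 2 ∂slab a b ≤
      (∫ x, (1 + x ^ 2) * v a x ^ 2) + (∫ x, (1 + x ^ 2) * v b x ^ 2)
        + ((∫ q, v q.1 q.2 ^ 2 ∂slab a b)
          + ∫ q : ℝ × ℝ, (1 + q.2 ^ 2) * g q.1 q.2 ^ 2 ∂slab a b) := by
  have hv_cont := hv.continuous
  have hvx_cont := hv.spaceDeriv.continuous
  obtain ⟨hg', hxg⟩ := integrable_sq_and_sq_mul_of_one_add_sq_mul
    continuous_snd.aestronglyMeasurable hg_cont.aestronglyMeasurable hg2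
  have hvg := integrable_mul_of_integrable_sq hv_cont.aestronglyMeasurable
    hg_cont.aestronglyMeasurable hv2 hg'
  have hvvx := integrable_mul_of_integrable_sq hv_cont.aestronglyMeasurable
    hvx_cont.aestronglyMeasurable hv2 hvx
  have hvxg := integrable_mul_of_integrable_sq hvx_cont.aestronglyMeasurable
    (Continuous.aestronglyMeasurable (by fun_prop)) hvx hxg
  have hα : Integrable (fun q : ℝ × ℝ => -(3 * ∂ₓ v q.1 q.2 ^ 2 + 2 * (v q.1 q.2 * g q.1 q.2)))
      (slab a b) := ((hvx.const_mul 3).add (hvg.const_mul 2)).neg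
  have hγ : Integrable (fun q : ℝ × ℝ => q.2 * (-2 * (∂ₓ v q.1 q.2 * g q.1 q.2))) (slab a b) :=
    (hvxg.const_mul (-2)).congr (ae_of_all _ fun q => by ring)
  have hslice {t : ℝ} (ht : Integrable fun x => (1 + x ^ 2) * v t x ^ 2) :=
    integrable_id_mul_sq (hv.continuous_slice t) ht
  have hlaw := (isBalanceLaw_sq_of_forcedAiry hv hg_cont hg).integral_slab hab isWeight_id
    (by simpa only [one_mul] using hα) (by simpa only [one_mul] using hvvx.const_mul (-2)) hγ
    (hslice hva).1 (hslice hvb).1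
  simp only [one_mul, zero_mul, add_zero] at hlaw
  have hv2g2 : Integrable (fun q : ℝ × ℝ => v q.1 q.2 ^ 2 + (1 + q.2 ^ 2) * g q.1 q.2 ^ 2)
      (slab a b) := hv2.add hg2
  have hαγ : Integrable (fun q : ℝ × ℝ => -(3 * ∂ₓ v q.1 q.2 ^ 2 + 2 * (v q.1 q.2 * g q.1 q.2))
      + q.2 * (-2 * (∂ₓ v q.1 q.2 * g q.1 q.2))) (slab a b) := hα.add hγ
  have hmono : ∫ q, 2 * ∂ₓ v q.1 q.2 ^ 2 ∂slab a b ≤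
      ∫ q : ℝ × ℝ, (v q.1 q.2 ^ 2 + (1 + q.2 ^ 2) * g q.1 q.2 ^ 2
        - (-(3 * ∂ₓ v q.1 q.2 ^ 2 + 2 * (v q.1 q.2 * g q.1 q.2))
          + q.2 * (-2 * (∂ₓ v q.1 q.2 * g q.1 q.2)))) ∂slab a b :=
    integral_mono (hvx.const_mul 2) (hv2g2.sub hαγ) fun q => by
      linarith [sq_nonneg (v q.1 q.2 + g q.1 q.2), sq_nonneg (∂ₓ v q.1 q.2 + q.2 * g q.1 q.2)]
  rw [integral_const_mul, integral_sub hv2g2 hαγ, ← hlaw, integral_add hv2 hg2] at hmono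
  linarith [abs_le.1 (hslice hva).2, abs_le.1 (hslice hvb).2]

end ForcedAiry

section EnergyConservation

lemma RapidDecay.integrable_one_add_sq_mul_sq {f : ℝ → ℝ} (hf : RapidDecay f) :
    Integrable fun x => (1 + x ^ 2) * f x ^ 2 := by
  simpa only [one_add_mul, mul_pow] using (hf.sq.add hf.id_mul.sq).integrable

namespace IsBoundedSolution

variable {p : ℝ} {u : ℝ → ℝ → ℝ} {a b N : ℝ} (h : IsBoundedSolution p u a b N)
include h

lemma integrable_one_add_sq_mul_sq_spaceDeriv :
    Integrable (fun q : ℝ × ℝ => (1 + q.2 ^ 2) * ∂ₓ u q.1 q.2 ^ 2) (slab a b) := by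
  have hu := h.smooth.spaceDeriv.continuous
  refine h.integrable_one_add_sq_mul.mono' (Continuous.aestronglyMeasurable (by fun_prop))
    (ae_of_all _ fun q => ?_)
  rw [norm_eq_abs, abs_of_nonneg (by positivity)]
  gcongr
  exact le_add_of_nonneg_right (by positivity)

lemma sq_diffQuot_signedPow_le {δ t : ℝ} (ht : t ∈ Icc a b) (x : ℝ) :
    diffQuot δ (fun t x => signedPow p (u t x)) t x ^ 2 ≤
      (p * √(2 * N) ^ (p - 1)) ^ 2 * diffQuot δ u t x ^ 2 := by
  have := h.pos
  rw [← mul_pow, sq_le_sq, abs_mul, abs_of_nonneg (by positivity : 0 ≤ p * √(2 * N) ^ (p - 1)),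
    diffQuot, diffQuot, abs_div, abs_div, ← mul_div_assoc]
  gcongr
  exact abs_signedPow_sub_le h.one_lt (h.abs_apply_le ht _) (h.abs_apply_le ht _)

lemma integral_one_add_sq_mul_sq_diffQuot_signedPow_le {δ : ℝ} (hδ : 0 < δ) (hδ1 : δ ≤ 1) :
    Integrable (fun q : ℝ × ℝ =>
        (1 + q.2 ^ 2) * diffQuot δ (fun t x => signedPow p (u t x)) q.1 q.2 ^ 2) (slab a b) ∧
      ∫ q : ℝ × ℝ, (1 + q.2 ^ 2) * diffQuot δ (fun t x => signedPow p (u t x)) q.1 q.2 ^ 2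
          ∂slab a b ≤
        (p * √(2 * N) ^ (p - 1)) ^ 2 *
          (3 * ∫ q : ℝ × ℝ, (1 + q.2 ^ 2) * ∂ₓ u q.1 q.2 ^ 2 ∂slab a b) := by
  obtain ⟨hint, hle⟩ := h.smooth.integral_slab_one_add_sq_mul_sq_diffQuot_le hδ hδ1
    h.integrable_one_add_sq_mul_sq_spaceDeriv
  have hdom : ∀ᵐ q : ℝ × ℝ ∂slab a b,
      (1 + q.2 ^ 2) * diffQuot δ (fun t x => signedPow p (u t x)) q.1 q.2 ^ 2 ≤
        (p * √(2 * N) ^ (p - 1)) ^ 2 * ((1 + q.2 ^ 2) * diffQuot δ u q.1 q.2 ^ 2) :=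
    ae_slab_of_forall_mem fun t ht x => by
      rw [mul_left_comm]
      gcongr
      exact h.sq_diffQuot_signedPow_le ht x
  have hcont := continuous_diffQuot (f := fun t x => signedPow p (u t x)) h.continuous_signedPow δ
  have hint' := (hint.const_mul ((p * √(2 * N) ^ (p - 1)) ^ 2)).mono'
    (f := fun q : ℝ × ℝ =>
      (1 + q.2 ^ 2) * diffQuot δ (fun t x => signedPow p (u t x)) q.1 q.2 ^ 2)
    (Continuous.aestronglyMeasurable (by fun_prop)) (hdom.mono fun q hq => by
      rwa [norm_eq_abs, abs_of_nonneg (by positivity)])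
  refine ⟨hint', (integral_mono_ae hint' (hint.const_mul _) hdom).trans ?_⟩
  rw [integral_const_mul]
  gcongr

lemma hasDerivAt_diffQuot_signedPow (δ t x : ℝ) :
    HasDerivAt (diffQuot δ (fun t x => signedPow p (u t x)) t)
      (∂ₜ (diffQuot δ u) t x + ∂ₓ (∂ₓ (∂ₓ (diffQuot δ u))) t x) x := by
  refine (hasDerivAt_diffQuot h.hasDerivAt_signedPow δ t x).congr_deriv ?_
  rw [h.smooth.timeDeriv_diffQuot, h.smooth.spaceDeriv_diffQuot,
    h.smooth.spaceDeriv.spaceDeriv_diffQuot, h.smooth.spaceDeriv.spaceDeriv.spaceDeriv_diffQuot]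
  simp only [diffQuot, h.timeDeriv_eq]
  ring

theorem exists_integral_sq_diffQuot_spaceDeriv_le : ∃ C, ∀ δ : ℝ, 0 < δ → δ ≤ 1 →
    ∫ q : ℝ × ℝ, diffQuot δ (∂ₓ u) q.1 q.2 ^ 2 ∂slab a b ≤ C := by
  let A t := 3 * ∫ x, (1 + x ^ 2) * ∂ₓ u t x ^ 2
  let B := 3 * ∫ q : ℝ × ℝ, (1 + q.2 ^ 2) * ∂ₓ u q.1 q.2 ^ 2 ∂slab a b
  refine ⟨(A a + A b + (B + (p * √(2 * N) ^ (p - 1)) ^ 2 * B)) / 2, fun δ hδ hδ1 => ?_⟩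
  have hslice (t : ℝ) := h.smooth.integral_one_add_sq_mul_sq_diffQuot_le hδ hδ1
    (h.rapidDecay_spaceDeriv t).integrable_one_add_sq_mul_sq
  have hcont := (isSmooth_diffQuot h.smooth δ).continuous
  obtain ⟨hv, hvB⟩ := h.smooth.integral_slab_one_add_sq_mul_sq_diffQuot_le hδ hδ1
    h.integrable_one_add_sq_mul_sq_spaceDeriv
  obtain ⟨hg, hgB⟩ := h.integral_one_add_sq_mul_sq_diffQuot_signedPow_le hδ hδ1
  have hv2 := (integrable_sq_and_sq_mul_of_one_add_sq_mul
    continuous_snd.aestronglyMeasurable hcont.aestronglyMeasurable hv).1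
  have hv2B : ∫ q : ℝ × ℝ, diffQuot δ u q.1 q.2 ^ 2 ∂slab a b ≤ B :=
    (integral_mono hv2 hv fun q =>
      le_mul_of_one_le_left (sq_nonneg _) (by linarith [sq_nonneg q.2])).trans hvB
  have hairy := integral_sq_spaceDeriv_le_of_forcedAiry h.le (isSmooth_diffQuot h.smooth δ)
    (continuous_diffQuot h.continuous_signedPow δ) (h.hasDerivAt_diffQuot_signedPow δ)
    (hslice a).1 (hslice b).1 hv2 (by
      rw [h.smooth.spaceDeriv_diffQuot]
      exact integrable_sq_diffQuot h.smooth.spaceDeriv.continuous δ h.integrable_sq_spaceDeriv) hg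
  rw [h.smooth.spaceDeriv_diffQuot] at hairy
  linarith [(hslice a).2, (hslice b).2]

theorem integrable_sq_spaceDeriv2 :
    Integrable (fun q : ℝ × ℝ => ∂ₓ (∂ₓ u) q.1 q.2 ^ 2) (slab a b) := by
  obtain ⟨C, hC⟩ := h.exists_integral_sq_diffQuot_spaceDeriv_le
  have hn (n : ℕ) : 0 < 1 / ((n : ℝ) + 1) ∧ 1 / ((n : ℝ) + 1) ≤ 1 :=
    ⟨by positivity, div_le_one_of_le₀ (by simp) (by positivity)⟩
  have hbound (n : ℕ) := hC _ (hn n).1 (hn n).2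
  exact (integrable_and_integral_le_of_tendsto
    ((integral_nonneg fun q => sq_nonneg _).trans (hbound 0))
    (fun n => integrable_sq_diffQuot h.smooth.spaceDeriv.continuous _ h.integrable_sq_spaceDeriv)
    (fun n q => sq_nonneg _) hbound
    fun q => (h.smooth.spaceDeriv.tendsto_diffQuot q.1 q.2).pow 2).1

lemma integrable_energyFlux : Integrable (fun q : ℝ × ℝ => energyFlux p u q.1 q.2) (slab a b) :=
  ((integrable_mul_of_integrable_sq h.smooth.spaceDeriv.spaceDeriv.continuous.aestronglyMeasurable
    h.continuous_signedPow.aestronglyMeasurable h.integrable_sq_spaceDeriv2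
    h.integrable_sq_signedPow).const_mul 2).sub
    ((h.integrable_sq_spaceDeriv2.const_mul (3 / 2)).add
      (h.integrable_sq_signedPow.const_mul (1 / 2)))

lemma integrable_energyPotential :
    Integrable (fun q : ℝ × ℝ => energyPotential p u q.1 q.2) (slab a b) := by
  have hux := h.smooth.spaceDeriv.continuous.aestronglyMeasurable (μ := slab a b)
  have huxs := integrable_mul_of_integrable_sq hux h.continuous_signedPow.aestronglyMeasurable
    h.integrable_sq_spaceDeriv h.integrable_sq_signedPow
  have huxuxx := integrable_mul_of_integrable_sq hux
    h.smooth.spaceDeriv.spaceDeriv.continuous.aestronglyMeasurable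
    h.integrable_sq_spaceDeriv h.integrable_sq_spaceDeriv2
  exact (huxs.sub huxuxx).congr (ae_of_all _ fun q => (mul_sub _ _ _).symm)

theorem energy_eq : energy p u b = energy p u a := by
  have hlaw := h.energyLaw.integral_slab h.le isWeight_one
    (by simpa using h.integrable_energyFlux) (by simpa using h.integrable_energyPotential)
    (by simp) (by simpa using (h.rapidDecay_energyDensity a).integrable)
    (by simpa using (h.rapidDecay_energyDensity b).integrable)
  simp only [one_mul, zero_mul, Pi.zero_apply, mul_zero, add_zero, integral_zero] at hlaw
  exact sub_eq_zero.1 hlaw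

end IsBoundedSolution

lemma lowerSemicontinuous_integral_of_nonneg {F : ℝ → ℝ → ℝ}
    (hF : Continuous fun q : ℝ × ℝ => F q.1 q.2) (hF0 : ∀ t x, 0 ≤ F t x)
    (hint : ∀ t, Integrable (F t)) : LowerSemicontinuous fun t => ∫ x, F t x := by
  refine lowerSemicontinuous_iff_isClosed_preimage.2 fun y => ?_
  have htrunc : (fun t => ∫ x, F t x) ⁻¹' Iic y =
      ⋂ R : ℕ, {t | ∫ x in (-(R : ℝ))..R, F t x ≤ y} := by
    ext t
    rw [mem_preimage, mem_Iic, mem_iInter]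
    refine ⟨fun ht R => le_trans ?_ ht, fun ht => le_of_tendsto'
      (intervalIntegral_tendsto_integral (hint t)
        (tendsto_neg_atTop_atBot.comp tendsto_natCast_atTop_atTop) tendsto_natCast_atTop_atTop) ht⟩
    rw [intervalIntegral.integral_of_le (by linarith [R.cast_nonneg (α := ℝ)])]
    exact setIntegral_le_integral (hint t) (ae_of_all _ (hF0 t))
  rw [htrunc]
  exact isClosed_iInter fun R => isClosed_le
    (intervalIntegral.continuous_parametric_intervalIntegral_of_continuous' hF _ _)
    continuous_const

namespace IsSolution

variable {p : ℝ} {u : ℝ → ℝ → ℝ} (h : IsSolution p u)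
include h

lemma lowerSemicontinuous_mass_add_energy :
    LowerSemicontinuous fun t => mass u t + energy p u t := by
  have hsum (t : ℝ) : mass u t + energy p u t = ∫ x, (u t x ^ 2 + energyDensity p u t x) :=
    (integral_add (h.rapidDecay t).sq.integrable (h.rapidDecay_energyDensity t).integrable).symm
  simp only [hsum]
  exact lowerSemicontinuous_integral_of_nonneg
    ((h.smooth.continuous.pow 2).add h.continuous_energyDensity)
    (fun t x => add_nonneg (sq_nonneg _) (h.energyDensity_nonneg t x))
    fun t => (h.rapidDecay t).sq.integrable.add (h.rapidDecay_energyDensity t).integrable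

theorem mass_add_energy_eq (s t : ℝ) : mass u s + energy p u s = mass u t + energy p u t := by
  refine eq_of_lowerSemicontinuous_of_bddAbove h.lowerSemicontinuous_mass_add_energy
    (fun a b hbdd => ?_) s t
  wlog hab : a ≤ b generalizing a b
  · exact (this b a (uIcc_comm a b ▸ hbdd) (le_of_not_ge hab)).symm
  obtain ⟨N, hN⟩ := hbdd
  have hbounded : IsBoundedSolution p u a b N :=
    ⟨h, hab, fun t ht => hN (mem_image_of_mem _ (uIcc_of_le hab ▸ ht))⟩
  rw [hbounded.mass_eq, hbounded.energy_eq]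

lemma isBoundedSolution {a b : ℝ} (hab : a ≤ b) :
    IsBoundedSolution p u a b (mass u 0 + energy p u 0) :=
  ⟨h, hab, fun t _ => (h.mass_add_energy_eq t 0).le⟩

theorem mass_eq (s t : ℝ) : mass u s = mass u t := by
  rcases le_total s t with hst | hst
  · exact (h.isBoundedSolution hst).mass_eq.symm
  · exact (h.isBoundedSolution hst).mass_eq

theorem energy_eq (s t : ℝ) : energy p u s = energy p u t := by
  linarith [h.mass_add_energy_eq s t, h.mass_eq s t]

end IsSolution

end EnergyConservation

section Monotonicity

namespace IsSolution

variable {p : ℝ} {u : ℝ → ℝ → ℝ} (h : IsSolution p u)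
include h

lemma integral_mul_spaceDeriv2 (t : ℝ) :
    ∫ x, u t x * ∂ₓ (∂ₓ u) t x = -∫ x, ∂ₓ u t x ^ 2 := by
  have hux := h.rapidDecay_spaceDeriv t
  simp only [sq]
  exact integral_mul_deriv_eq_deriv_mul_of_integrable (fun x _ => h.smooth.hasDerivAt_space t x)
    (fun x _ => h.smooth.spaceDeriv.hasDerivAt_space t x)
    ((h.rapidDecay t).mul (h.rapidDecay_spaceDeriv2 t)).integrable (hux.mul hux).integrable
    ((h.rapidDecay t).mul hux).integrable

lemma integral_spaceDeriv2_mul_signedPow_nonpos (t : ℝ) :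
    ∫ x, ∂ₓ (∂ₓ u) t x * signedPow p (u t x) ≤ 0 := by
  have hux := h.rapidDecay_spaceDeriv t
  have hs := h.rapidDecay_signedPow t
  have hs' : RapidDecay fun x => p * |u t x| ^ (p - 1) * ∂ₓ u t x := by
    simpa only [mul_assoc] using (h.rapidDecay_abs_rpow_mul t hux).const_mul p
  have hparts := integral_mul_deriv_eq_deriv_mul_of_integrable
    (fun x _ => h.hasDerivAt_signedPow t x)
    (fun x _ => h.smooth.spaceDeriv.hasDerivAt_space t x)
    (hs.mul (h.rapidDecay_spaceDeriv2 t)).integrable (hs'.mul hux).integrable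
    (hs.mul hux).integrable
  simp_rw [mul_comm (∂ₓ (∂ₓ u) t _), hparts, mul_assoc, ← sq]
  have := h.pos
  exact neg_nonpos.2 (integral_nonneg fun x => by positivity)

lemma integral_massPotential (t : ℝ) : ∫ x, massPotential u t x = 0 :=
  integral_eq_zero_of_hasDerivAt_of_integrable (f := fun x => -u t x ^ 2)
    (fun x => ((h.smooth.hasDerivAt_space t x).pow 2).neg.congr_deriv
      (by unfold massPotential; push_cast; ring))
    (((h.rapidDecay t).mul (h.rapidDecay_spaceDeriv t)).integrable.const_mul (-2))
    (h.rapidDecay t).sq.integrable.neg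

lemma rapidDecay_massFlux (t : ℝ) : RapidDecay (massFlux p u t) := by
  have hneg := (((h.rapidDecay_spaceDeriv t).sq.const_mul 3).add
    ((h.rapidDecay_abs_rpow t).const_mul (2 * p / (p + 1)))).const_mul (-1)
  simp only [neg_one_mul] at hneg
  exact hneg

lemma rapidDecay_energyFlux (t : ℝ) : RapidDecay (energyFlux p u t) :=
  (((h.rapidDecay_spaceDeriv2 t).mul (h.rapidDecay_signedPow t)).const_mul 2).sub
    (((h.rapidDecay_spaceDeriv2 t).sq.const_mul (3 / 2)).add
      ((h.rapidDecay_signedPow t).sq.const_mul (1 / 2)))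

lemma integral_massFlux (t : ℝ) : ∫ x, massFlux p u t x =
    -(3 * (∫ x, ∂ₓ u t x ^ 2) + 2 * p / (p + 1) * ∫ x, |u t x| ^ (p + 1)) := by
  unfold massFlux
  rw [integral_neg, integral_add ((h.rapidDecay_spaceDeriv t).sq.integrable.const_mul _)
    ((h.rapidDecay_abs_rpow t).integrable.const_mul _), integral_const_mul, integral_const_mul]

lemma energy_eq_add (t : ℝ) : energy p u t =
    (∫ x, ∂ₓ u t x ^ 2) / 2 + (∫ x, |u t x| ^ (p + 1)) / (p + 1) := by
  unfold energy energyDensity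
  rw [integral_add ((h.rapidDecay_spaceDeriv t).sq.integrable.div_const _)
    ((h.rapidDecay_abs_rpow t).integrable.div_const _), integral_div, integral_div]

lemma integral_massFlux_nonpos (t : ℝ) : ∫ x, massFlux p u t x ≤ 0 := by
  have := h.pos
  rw [h.integral_massFlux, neg_nonpos]
  positivity

lemma neg_le_integral_massFlux (t : ℝ) :
    -((6 + 2 * p) * energy p u t) ≤ ∫ x, massFlux p u t x := by
  have hA : 0 ≤ p * ∫ x, ∂ₓ u t x ^ 2 := mul_nonneg h.pos.le (by positivity)
  have hB : 0 ≤ (∫ x, |u t x| ^ (p + 1)) / (p + 1) := by have := h.pos; positivity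
  rw [h.integral_massFlux, h.energy_eq_add, neg_le_neg_iff, div_mul_eq_mul_div, mul_div_assoc]
  linarith

lemma half_integral_sq_le_neg_integral_energyFlux (t : ℝ) :
    1 / 2 * ∫ x, (√3 * ∂ₓ (∂ₓ u) t x - signedPow p (u t x)) ^ 2 ≤
      -∫ x, energyFlux p u t x := by
  have hcross := ((h.rapidDecay_spaceDeriv2 t).mul (h.rapidDecay_signedPow t)).integrable
  have hsquare (x : ℝ) : 1 / 2 * (√3 * ∂ₓ (∂ₓ u) t x - signedPow p (u t x)) ^ 2 =
      (2 - √3) * (∂ₓ (∂ₓ u) t x * signedPow p (u t x)) - energyFlux p u t x := by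
    unfold energyFlux
    linear_combination 1 / 2 * ∂ₓ (∂ₓ u) t x ^ 2 * sq_sqrt (show (0 : ℝ) ≤ 3 by norm_num)
  have hsqrt : √3 ≤ 2 := by rw [sqrt_le_left two_pos.le]; norm_num
  rw [← integral_const_mul]
  simp only [hsquare]
  rw [integral_sub (hcross.const_mul _) (h.rapidDecay_energyFlux t).integrable,
    integral_const_mul]
  linarith [mul_nonpos_of_nonneg_of_nonpos (sub_nonneg.2 hsqrt)
    (h.integral_spaceDeriv2_mul_signedPow_nonpos t)]

/- Cauchy–Schwarz for `u` against `√3 u_xx - |u|^(p-1) u`; the constant `√3` is the one for which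
the square of the second factor has the `u_xx²` coefficient of the energy flux. -/
lemma sq_le_mass_mul_neg_integral_energyFlux (t : ℝ) :
    1 / 2 * (√3 * (∫ x, ∂ₓ u t x ^ 2) + ∫ x, |u t x| ^ (p + 1)) ^ 2 ≤
      mass u t * -∫ x, energyFlux p u t x := by
  have huuxx := (h.rapidDecay t).mul (h.rapidDecay_spaceDeriv2 t)
  have hw : RapidDecay fun x => √3 * ∂ₓ (∂ₓ u) t x - signedPow p (u t x) :=
    ((h.rapidDecay_spaceDeriv2 t).const_mul √3).sub (h.rapidDecay_signedPow t)
  have hpair : ∫ x, u t x * (√3 * ∂ₓ (∂ₓ u) t x - signedPow p (u t x)) =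
      -(√3 * (∫ x, ∂ₓ u t x ^ 2) + ∫ x, |u t x| ^ (p + 1)) := by
    simp only [mul_sub, mul_signedPow h.pos, mul_left_comm (u t _)]
    rw [integral_sub (huuxx.integrable.const_mul _) (h.rapidDecay_abs_rpow t).integrable,
      integral_const_mul, h.integral_mul_spaceDeriv2]
    ring
  have hcs := sq_integral_mul_le (h.rapidDecay t).continuous.aestronglyMeasurable
    hw.continuous.aestronglyMeasurable (h.rapidDecay t).sq.integrable hw.sq.integrable
  rw [hpair, neg_sq] at hcs
  calc 1 / 2 * (√3 * (∫ x, ∂ₓ u t x ^ 2) + ∫ x, |u t x| ^ (p + 1)) ^ 2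
      ≤ 1 / 2 * (mass u t * ∫ x, (√3 * ∂ₓ (∂ₓ u) t x - signedPow p (u t x)) ^ 2) := by
        gcongr
        exact hcs
    _ = mass u t * (1 / 2 * ∫ x, (√3 * ∂ₓ (∂ₓ u) t x - signedPow p (u t x)) ^ 2) :=
        mul_left_comm _ _ _
    _ ≤ mass u t * -∫ x, energyFlux p u t x :=
        mul_le_mul_of_nonneg_left (h.half_integral_sq_le_neg_integral_energyFlux t)
          (mass_nonneg u t)

theorem tao_monotonicity (hp : √3 ≤ p) (t : ℝ) :
    (p - 1) ^ 2 / (2 * (p + 1) ^ 2) * (∫ x, |u t x| ^ (p + 1)) ^ 2 ≤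
      energy p u t * (∫ x, massFlux p u t x) - mass u t * ∫ x, energyFlux p u t x := by
  have hcs := h.sq_le_mass_mul_neg_integral_energyFlux t
  rw [h.integral_massFlux, h.energy_eq_add]
  set A := ∫ x, ∂ₓ u t x ^ 2
  set B := ∫ x, |u t x| ^ (p + 1)
  have hp1 : 0 < p + 1 := by linarith [h.pos]
  have hsq : √3 ^ 2 = 3 := sq_sqrt (by norm_num)
  have hcoeff : (p + 3) / (p + 1) ≤ √3 := by
    rw [div_le_iff₀ hp1]
    nlinarith [one_le_sqrt.2 (show (1 : ℝ) ≤ 3 by norm_num)]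
  have hexpand : 1 / 2 * (√3 * A + B) ^ 2 - (A / 2 + B / (p + 1)) * (3 * A + 2 * p / (p + 1) * B) =
      (√3 - (p + 3) / (p + 1)) * (A * B) + (p - 1) ^ 2 / (2 * (p + 1) ^ 2) * B ^ 2 := by
    rw [show 1 / 2 * (√3 * A + B) ^ 2 = 1 / 2 * (√3 ^ 2 * A ^ 2 + 2 * √3 * (A * B) + B ^ 2) by ring,
      hsq]
    field_simp
    ring
  have hAB : 0 ≤ (√3 - (p + 3) / (p + 1)) * (A * B) :=
    mul_nonneg (sub_nonneg.2 hcoeff) (by positivity)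
  linarith

end IsSolution

lemma rpow_mul_integral_sq_le {f : ℝ → ℝ} {p l R : ℝ} (c : ℝ) (hp : 1 ≤ p) (hl : 0 < l)
    (hR : 0 < R) (hf : Integrable fun x => f x ^ 2) (hfp : Integrable fun x => |f x| ^ (p + 1))
    (hfc : Integrable fun x => ((x - c) * f x) ^ 2) :
    l ^ (p - 1) * ∫ x, f x ^ 2 ≤ (∫ x, |f x| ^ (p + 1))
      + l ^ (p - 1) * (l ^ 2 * (2 * R) + (∫ x, ((x - c) * f x) ^ 2) / R ^ 2) := by
  have hpoint (x : ℝ) : l ^ (p - 1) * f x ^ 2 ≤ |f x| ^ (p + 1) + l ^ (p - 1) *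
      ((Icc (c - R) (c + R)).indicator (fun _ => l ^ 2) x + ((x - c) * f x) ^ 2 / R ^ 2) := by
    have hind : 0 ≤ (Icc (c - R) (c + R)).indicator (fun _ => l ^ 2) x :=
      indicator_nonneg (fun _ _ => sq_nonneg l) x
    rcases le_total l |f x| with hlarge | hsmall
    · refine le_add_of_le_of_nonneg ?_ (by positivity)
      rw [abs_rpow_add_one (by linarith)]
      gcongr
    refine le_add_of_nonneg_of_le (by positivity) ?_
    gcongr
    by_cases hx : x ∈ Icc (c - R) (c + R)
    · rw [indicator_of_mem hx, ← sq_abs (f x)]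
      exact le_add_of_le_of_nonneg (by gcongr) (by positivity)
    · have hRx : R ^ 2 ≤ (x - c) ^ 2 := by
        refine sq_le_sq.2 (le_of_not_gt fun hlt => hx ?_)
        rw [abs_of_pos hR, abs_lt] at hlt
        constructor <;> linarith
      refine le_add_of_nonneg_of_le hind ((le_div_iff₀ (by positivity)).2 ?_)
      rw [mul_pow, mul_comm]
      gcongr
  have hind : Integrable ((Icc (c - R) (c + R)).indicator fun _ => l ^ 2) :=
    (integrable_indicator_iff measurableSet_Icc).2 (integrable_const _)
  have hlocal : Integrable fun x =>
      (Icc (c - R) (c + R)).indicator (fun _ => l ^ 2) x + ((x - c) * f x) ^ 2 / R ^ 2 :=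
    hind.add (hfc.div_const _)
  have hsum : Integrable fun x => |f x| ^ (p + 1) + l ^ (p - 1) *
      ((Icc (c - R) (c + R)).indicator (fun _ => l ^ 2) x + ((x - c) * f x) ^ 2 / R ^ 2) :=
    hfp.add (hlocal.const_mul _)
  have hint := integral_mono (hf.const_mul _) hsum hpoint
  rw [integral_const_mul, integral_add hfp (hlocal.const_mul _), integral_const_mul,
    integral_add hind (hfc.div_const _), integral_div, integral_indicator_const _ measurableSet_Icc,
    Real.volume_real_Icc_of_le (by linarith), smul_eq_mul,
    show (c + R - (c - R)) * l ^ 2 = l ^ 2 * (2 * R) by ring] at hint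
  exact hint

/- A profile of given mass and bounded variance cannot spread out, so its `L^(p+1)` norm stays
away from zero. -/
lemma exists_pos_forall_le_integral_abs_rpow {p M : ℝ} (hp : 1 ≤ p) (hM : 0 < M) (D : ℝ) :
    ∃ b > 0, ∀ f : ℝ → ℝ, RapidDecay f → ∫ x, f x ^ 2 = M → ∀ c, ∫ x, ((x - c) * f x) ^ 2 ≤ D →
      (Integrable fun x => |f x| ^ (p + 1)) → b ≤ ∫ x, |f x| ^ (p + 1) := by
  obtain ⟨R, hR, hRM⟩ : ∃ R, 1 ≤ R ∧ (R - 1) * M = 4 * |D| :=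
    ⟨1 + 4 * |D| / M, le_add_of_nonneg_right (by positivity), by field⟩
  have hDR : D / R ^ 2 ≤ M / 4 := by
    rw [div_le_iff₀ (by positivity)]
    have hsq : (R - 1) * M ≤ R ^ 2 * M := by gcongr; nlinarith
    linarith [le_abs_self D]
  set l := √(M / (8 * R))
  have hl : 0 < l := sqrt_pos.2 (by positivity)
  have hlR : l ^ 2 * (2 * R) = M / 4 := by
    rw [sq_sqrt (by positivity)]
    field
  refine ⟨l ^ (p - 1) * (M / 2), by positivity, fun f hf hfM c hfD hfp => ?_⟩
  have hbound := rpow_mul_integral_sq_le c hp hl (zero_lt_one.trans_le hR) hf.sq.integrable hfp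
    (hf.sub_const_mul c).sq.integrable
  rw [hfM, hlR] at hbound
  have hvar : l ^ (p - 1) * (M / 4 + (∫ x, ((x - c) * f x) ^ 2) / R ^ 2) ≤
      l ^ (p - 1) * (M / 4 + M / 4) := by
    have := (div_le_div_of_nonneg_right hfD (sq_nonneg R)).trans hDR
    gcongr
  linarith

end Monotonicity

section Moments

/-- The first moment of the mass density; divided by the mass it is the centre of mass. -/
noncomputable def massMoment (u : ℝ → ℝ → ℝ) (t : ℝ) : ℝ := ∫ x, x * u t x ^ 2

/-- The first moment of the energy density; divided by the energy it is the centre of energy. -/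
noncomputable def energyMoment (p : ℝ) (u : ℝ → ℝ → ℝ) (t : ℝ) : ℝ :=
  ∫ x, x * energyDensity p u t x

/-- The product of the mass, the energy, and the centre of mass minus the centre of energy. -/
noncomputable def centerGap (p : ℝ) (u : ℝ → ℝ → ℝ) (t : ℝ) : ℝ :=
  energy p u t * massMoment u t - mass u t * energyMoment p u t

/-- The second moment of the mass density about the point `c`. -/
noncomputable def secondMoment (u : ℝ → ℝ → ℝ) (c t : ℝ) : ℝ := ∫ x, ((x - c) * u t x) ^ 2

lemma secondMoment_nonneg (u : ℝ → ℝ → ℝ) (c t : ℝ) : 0 ≤ secondMoment u c t :=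
  integral_nonneg fun _ => sq_nonneg _

lemma abs_sub_le_one_add_abs_mul (c x : ℝ) : |x - c| ≤ (1 + |c|) * (1 + |x|) := by
  have := abs_sub x c
  nlinarith [mul_nonneg (abs_nonneg c) (abs_nonneg x)]

lemma isWeight_sub_sq (c : ℝ) : IsWeight (fun x => (x - c) ^ 2) (fun x => 2 * (x - c))
    (fun _ => 2) fun x => 2 * (1 + |c|) ^ 2 * (1 + |x|) where
  hasDerivAt x := (((hasDerivAt_id' x).sub_const c).pow 2).congr_deriv (by simp)
  hasDerivAt' x := (((hasDerivAt_id' x).sub_const c).const_mul 2).congr_deriv (by simp)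
  continuous'' := continuous_const
  abs_le x := by
    have hsq := pow_le_pow_left₀ (abs_nonneg _) (abs_sub_le_one_add_abs_mul c x) 2
    rw [mul_pow] at hsq
    rw [abs_pow]
    nlinarith [abs_nonneg (x - c)]
  abs_deriv_le x := by
    rw [abs_mul, abs_two]
    nlinarith [abs_sub_le_one_add_abs_mul c x, abs_nonneg c,
      mul_nonneg (abs_nonneg c) (abs_nonneg x)]
  abs_deriv2_le x := by
    rw [abs_two]
    nlinarith [abs_nonneg c, mul_nonneg (abs_nonneg x) (sq_nonneg (1 + |c|))]

namespace IsBoundedSolution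

variable {p : ℝ} {u : ℝ → ℝ → ℝ} {a b N : ℝ} (h : IsBoundedSolution p u a b N)
include h

lemma massMoment_sub_eq :
    massMoment u b - massMoment u a = ∫ q, massFlux p u q.1 q.2 ∂slab a b := by
  have hlaw := h.massLaw.integral_slab h.le isWeight_id (by simpa using h.integrable_massFlux)
    (by simpa using h.integrable_massPotential) (by simp) (h.rapidDecay a).sq.id_mul.integrable
    (h.rapidDecay b).sq.id_mul.integrable
  simp only [one_mul, zero_mul, Pi.zero_apply, mul_zero, add_zero] at hlaw
  exact hlaw

lemma energyMoment_sub_eq :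
    energyMoment p u b - energyMoment p u a = ∫ q, energyFlux p u q.1 q.2 ∂slab a b := by
  have hlaw := h.energyLaw.integral_slab h.le isWeight_id (by simpa using h.integrable_energyFlux)
    (by simpa using h.integrable_energyPotential) (by simp)
    (h.rapidDecay_energyDensity a).id_mul.integrable
    (h.rapidDecay_energyDensity b).id_mul.integrable
  simp only [one_mul, zero_mul, Pi.zero_apply, mul_zero, add_zero] at hlaw
  exact hlaw

lemma integrable_one_add_abs_mul_massFlux :
    Integrable (fun q : ℝ × ℝ => (1 + |q.2|) * massFlux p u q.1 q.2) (slab a b) := by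
  refine (h.integrable_one_add_sq_mul.const_mul (2 * (3 + 2 * p / (p + 1)))).mono'
    (Continuous.aestronglyMeasurable (by have := h.continuous_massFlux; fun_prop))
    (ae_of_all _ fun q => ?_)
  have hp := h.pos
  have hweight : 1 + |q.2| ≤ 2 * (1 + q.2 ^ 2) := by
    rw [← sq_abs q.2]
    nlinarith [sq_nonneg (|q.2| - 1), sq_nonneg |q.2|]
  have hflux : |massFlux p u q.1 q.2| ≤
      (3 + 2 * p / (p + 1)) * (∂ₓ u q.1 q.2 ^ 2 + |u q.1 q.2| ^ (p + 1)) := by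
    have hc : 0 ≤ 2 * p / (p + 1) * ∂ₓ u q.1 q.2 ^ 2 := by positivity
    have hpow : 0 ≤ |u q.1 q.2| ^ (p + 1) := by positivity
    unfold massFlux
    rw [abs_neg, abs_of_nonneg (by positivity)]
    linarith
  calc ‖(1 + |q.2|) * massFlux p u q.1 q.2‖ = (1 + |q.2|) * |massFlux p u q.1 q.2| := by
        rw [norm_mul, norm_eq_abs, norm_eq_abs, abs_of_nonneg (by positivity)]
    _ ≤ 2 * (1 + q.2 ^ 2) *
        ((3 + 2 * p / (p + 1)) * (∂ₓ u q.1 q.2 ^ 2 + |u q.1 q.2| ^ (p + 1))) := by gcongr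
    _ = 2 * (3 + 2 * p / (p + 1)) *
        ((1 + q.2 ^ 2) * (∂ₓ u q.1 q.2 ^ 2 + |u q.1 q.2| ^ (p + 1))) := by ring

lemma integrable_one_add_abs_mul_massPotential :
    Integrable (fun q : ℝ × ℝ => (1 + |q.2|) * massPotential u q.1 q.2) (slab a b) := by
  have hux : Continuous fun q : ℝ × ℝ => (1 + |q.2|) * ∂ₓ u q.1 q.2 := by
    have := h.smooth.spaceDeriv.continuous
    fun_prop
  have hux2 : Integrable (fun q : ℝ × ℝ => ((1 + |q.2|) * ∂ₓ u q.1 q.2) ^ 2) (slab a b) := by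
    refine (h.integrable_one_add_sq_mul_sq_spaceDeriv.const_mul 2).mono'
      (hux.pow 2).aestronglyMeasurable (ae_of_all _ fun q => ?_)
    have hweight : (1 + |q.2|) ^ 2 ≤ 2 * (1 + q.2 ^ 2) := by
      rw [← sq_abs q.2]
      linarith [sq_nonneg (|q.2| - 1)]
    rw [norm_eq_abs, abs_of_nonneg (sq_nonneg _), mul_pow, ← mul_assoc]
    gcongr
  convert (integrable_mul_of_integrable_sq h.smooth.continuous.aestronglyMeasurable
    hux.aestronglyMeasurable h.integrable_sq hux2).const_mul (-2) using 2
  unfold massPotential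
  ring

lemma integrable_sub_const_mul_massFlux (c : ℝ) :
    Integrable (fun q : ℝ × ℝ => 2 * (q.2 - c) * massFlux p u q.1 q.2) (slab a b) := by
  refine (h.integrable_one_add_abs_mul_massFlux.norm.const_mul (2 * (1 + |c|))).mono'
    (Continuous.aestronglyMeasurable (by have := h.continuous_massFlux; fun_prop))
    (ae_of_all _ fun q => ?_)
  calc ‖2 * (q.2 - c) * massFlux p u q.1 q.2‖ = 2 * |q.2 - c| * ‖massFlux p u q.1 q.2‖ := by
        rw [norm_mul, norm_mul, norm_two, norm_eq_abs (q.2 - c)]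
    _ ≤ 2 * ((1 + |c|) * (1 + |q.2|)) * ‖massFlux p u q.1 q.2‖ := by
        gcongr
        exact abs_sub_le_one_add_abs_mul c q.2
    _ = 2 * (1 + |c|) * ‖(1 + |q.2|) * massFlux p u q.1 q.2‖ := by
        rw [norm_mul, norm_of_nonneg (show 0 ≤ 1 + |q.2| by positivity)]
        ring

lemma secondMoment_sub_eq (c : ℝ) : secondMoment u c b - secondMoment u c a =
    ∫ q, (2 * (q.2 - c) * massFlux p u q.1 q.2 + 2 * massPotential u q.1 q.2) ∂slab a b := by
  have hint (t : ℝ) : Integrable fun x => (x - c) ^ 2 * u t x ^ 2 := by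
    simpa only [mul_pow] using ((h.rapidDecay t).sub_const_mul c).sq.integrable
  have hlaw := h.massLaw.integral_slab h.le (isWeight_sub_sq c)
    (by simpa only [← mul_assoc] using
      h.integrable_one_add_abs_mul_massFlux.const_mul (2 * (1 + |c|) ^ 2))
    (by simpa only [← mul_assoc] using
      h.integrable_one_add_abs_mul_massPotential.const_mul (2 * (1 + |c|) ^ 2))
    (by simp) (hint a) (hint b)
  simp only [Pi.zero_apply, mul_zero, add_zero, ← mul_pow] at hlaw
  exact hlaw

end IsBoundedSolution

namespace IsSolution

variable {p : ℝ} {u : ℝ → ℝ → ℝ} (h : IsSolution p u)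
include h

lemma massMoment_antitone : Antitone (massMoment u) := fun s t hst => by
  have hbdd := h.isBoundedSolution hst
  have hflux := integral_slab_le (c := 0) hst hbdd.integrable_massFlux
    fun t _ => h.integral_massFlux_nonpos t
  rw [← hbdd.massMoment_sub_eq] at hflux
  linarith

lemma massMoment_sub_le {s t : ℝ} (hst : s ≤ t) :
    massMoment u s - massMoment u t ≤ (6 + 2 * p) * energy p u 0 * (t - s) := by
  have hbdd := h.isBoundedSolution hst
  have hflux := le_integral_slab hst hbdd.integrable_massFlux
    fun t _ => (h.energy_eq t 0) ▸ h.neg_le_integral_massFlux t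
  rw [← hbdd.massMoment_sub_eq] at hflux
  linarith

lemma centerGap_add_le (hp : √3 ≤ p) {b : ℝ} (hb : 0 ≤ b)
    (hub : ∀ t, b ≤ ∫ x, |u t x| ^ (p + 1)) {s t : ℝ} (hst : s ≤ t) :
    centerGap p u s + (p - 1) ^ 2 / (2 * (p + 1) ^ 2) * b ^ 2 * (t - s) ≤ centerGap p u t := by
  have hbdd := h.isBoundedSolution hst
  have hflux := hbdd.integrable_massFlux.const_mul (energy p u 0)
  have hflux' := hbdd.integrable_energyFlux.const_mul (mass u 0)
  have hlower := le_integral_slab (f := fun t x =>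
      energy p u 0 * massFlux p u t x - mass u 0 * energyFlux p u t x)
    (c := (p - 1) ^ 2 / (2 * (p + 1) ^ 2) * b ^ 2) hst (hflux.sub hflux') fun t _ => by
      rw [integral_sub ((h.rapidDecay_massFlux t).integrable.const_mul _)
        ((h.rapidDecay_energyFlux t).integrable.const_mul _), integral_const_mul,
        integral_const_mul, ← h.energy_eq t, ← h.mass_eq t]
      refine le_trans ?_ (h.tao_monotonicity hp t)
      have := hub t
      gcongr
  rw [integral_sub hflux hflux', integral_const_mul, integral_const_mul,
    ← hbdd.massMoment_sub_eq, ← hbdd.energyMoment_sub_eq] at hlower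
  unfold centerGap
  rw [h.energy_eq s 0, h.energy_eq t 0, h.mass_eq s 0, h.mass_eq t 0]
  linarith

lemma centerGap_monotone (hp : √3 ≤ p) : Monotone (centerGap p u) := fun s t hst => by
  simpa using h.centerGap_add_le hp le_rfl (fun t => by positivity) hst

lemma secondMoment_eq (c t : ℝ) : secondMoment u c t =
    secondMoment u 0 t - 2 * c * massMoment u t + c ^ 2 * mass u t := by
  have hu := h.rapidDecay t
  have hexpand (x : ℝ) : ((x - c) * u t x) ^ 2 =
      ((x - 0) * u t x) ^ 2 - 2 * c * (x * u t x ^ 2) + c ^ 2 * u t x ^ 2 := by ring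
  have hdiff : Integrable fun x => ((x - 0) * u t x) ^ 2 - 2 * c * (x * u t x ^ 2) :=
    (hu.sub_const_mul 0).sq.integrable.sub (hu.sq.id_mul.integrable.const_mul _)
  unfold secondMoment massMoment mass
  simp_rw [hexpand]
  rw [integral_add hdiff (hu.sq.integrable.const_mul _),
    integral_sub (hu.sub_const_mul 0).sq.integrable (hu.sq.id_mul.integrable.const_mul _),
    integral_const_mul, integral_const_mul]

/- The second moment about any point is at least that about the centre of mass, which moves by at
most `(6 + 2p) E / M` in unit time. -/
lemma secondMoment_le_of_mem_Icc {c D s t : ℝ} (hM : 0 < mass u 0) (hD : secondMoment u c t ≤ D)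
    (ht : t ∈ Icc s (s + 1)) : secondMoment u (massMoment u s / mass u 0) t ≤
      D + ((6 + 2 * p) * energy p u 0) ^ 2 / mass u 0 := by
  have hE := h.energy_nonneg 0
  have hp := h.pos
  have hshift : (massMoment u s - massMoment u t) ^ 2 ≤ ((6 + 2 * p) * energy p u 0) ^ 2 := by
    refine pow_le_pow_left₀ (sub_nonneg.2 (h.massMoment_antitone ht.1)) ?_ 2
    exact (h.massMoment_sub_le ht.1).trans
      (mul_le_of_le_one_right (by positivity) (by linarith [ht.2]))
  have hcompare : secondMoment u (massMoment u s / mass u 0) t = secondMoment u c t -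
      mass u 0 * (c - massMoment u t / mass u 0) ^ 2 +
      (massMoment u s - massMoment u t) ^ 2 / mass u 0 := by
    rw [h.secondMoment_eq _ t, h.secondMoment_eq c t, h.mass_eq t 0]
    field_simp
    ring
  rw [hcompare]
  gcongr
  linarith [mul_nonneg hM.le (sq_nonneg (c - massMoment u t / mass u 0))]

end IsSolution

end Moments

section Virial

namespace IsSolution

variable {p : ℝ} {u : ℝ → ℝ → ℝ} (h : IsSolution p u)
include h

lemma integral_virial_eq (c t : ℝ) :
    ∫ x, (2 * (x - c) * massFlux p u t x + 2 * massPotential u t x) =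
      12 * (c * energy p u t - energyMoment p u t) +
        4 * (3 - p) / (p + 1) * ∫ x, (x - c) * |u t x| ^ (p + 1) := by
  have hp := h.pos
  have hexpand (x : ℝ) : 2 * (x - c) * massFlux p u t x + 2 * massPotential u t x =
      12 * c * energyDensity p u t x - 12 * (x * energyDensity p u t x) +
        4 * (3 - p) / (p + 1) * ((x - c) * |u t x| ^ (p + 1)) + 2 * massPotential u t x := by
    unfold massFlux energyDensity
    field
  have henergy := (h.rapidDecay_energyDensity t).integrable.const_mul (12 * c)
  have hmoment := (h.rapidDecay_energyDensity t).id_mul.integrable.const_mul 12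
  have hpow := ((h.rapidDecay_abs_rpow t).sub_const_mul c).integrable.const_mul
    (4 * (3 - p) / (p + 1))
  have hpot : Integrable fun x => 2 * massPotential u t x :=
    (((h.rapidDecay t).mul (h.rapidDecay_spaceDeriv t)).const_mul (-2)).integrable.const_mul 2
  simp_rw [hexpand]
  rw [integral_add (by exact (henergy.sub hmoment).add hpow) hpot,
    integral_add (by exact henergy.sub hmoment) hpow, integral_sub henergy hmoment]
  simp only [integral_const_mul]
  rw [h.integral_massPotential]
  unfold energy energyMoment
  ring

lemma abs_integral_sub_const_mul_abs_rpow_le (c t : ℝ) :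
    |∫ x, (x - c) * |u t x| ^ (p + 1)| ≤
      √(2 * (mass u 0 + energy p u 0)) ^ (p - 1) * (mass u 0 + secondMoment u c t) := by
  have hu (x : ℝ) := (h.isBoundedSolution (le_refl t)).abs_apply_le ⟨le_rfl, le_rfl⟩ x
  have hsecond := ((h.rapidDecay t).sub_const_mul c).sq.integrable
  have hsum : mass u 0 + secondMoment u c t = ∫ x, (u t x ^ 2 + ((x - c) * u t x) ^ 2) := by
    rw [integral_add (h.rapidDecay t).sq.integrable hsecond, h.mass_eq 0 t]
    rfl
  rw [hsum, ← integral_const_mul, ← norm_eq_abs]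
  refine norm_integral_le_of_norm_le (((h.rapidDecay t).sq.integrable.add hsecond).const_mul _)
    (ae_of_all _ fun x => ?_)
  have habs : |x - c| ≤ 1 + (x - c) ^ 2 := by
    rw [← sq_abs (x - c)]
    nlinarith [sq_nonneg (|x - c| - 1)]
  calc ‖(x - c) * |u t x| ^ (p + 1)‖ = |x - c| * |u t x| ^ (p + 1) := by
        rw [norm_mul, norm_eq_abs, norm_of_nonneg (by positivity)]
    _ ≤ (1 + (x - c) ^ 2) * (√(2 * (mass u 0 + energy p u 0)) ^ (p - 1) * u t x ^ 2) := by
        gcongr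
        exact abs_rpow_add_one_le h.one_lt.le (hu x)
    _ = √(2 * (mass u 0 + energy p u 0)) ^ (p - 1) * (u t x ^ 2 + ((x - c) * u t x) ^ 2) := by
        ring

lemma exists_forall_centerGap_le (hp : √3 ≤ p) (hM : 0 < mass u 0) {x₀ : ℝ → ℝ} {D : ℝ}
    (hD : ∀ t, secondMoment u (x₀ t) t ≤ D) : ∃ B, ∀ s, centerGap p u s ≤ B := by
  set V := D + ((6 + 2 * p) * energy p u 0) ^ 2 / mass u 0
  set J := |4 * (3 - p) / (p + 1)| *
    (√(2 * (mass u 0 + energy p u 0)) ^ (p - 1) * (mass u 0 + V))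
  refine ⟨mass u 0 / 12 * (V + J), fun s => ?_⟩
  have hs : s ≤ s + 1 := by linarith
  set c := massMoment u s / mass u 0 with hc
  have hV (t : ℝ) (ht : t ∈ Icc s (s + 1)) : secondMoment u c t ≤ V :=
    h.secondMoment_le_of_mem_Icc hM (hD t) ht
  have hslice (t : ℝ) (ht : t ∈ Icc s (s + 1)) : 12 / mass u 0 * centerGap p u s - J ≤
      ∫ x, (2 * (x - c) * massFlux p u t x + 2 * massPotential u t x) := by
    have herror : |4 * (3 - p) / (p + 1) * ∫ x, (x - c) * |u t x| ^ (p + 1)| ≤ J := by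
      rw [abs_mul]
      refine mul_le_mul_of_nonneg_left
        ((h.abs_integral_sub_const_mul_abs_rpow_le c t).trans ?_) (abs_nonneg _)
      have := hV t ht
      gcongr
    have hgap : centerGap p u s ≤ mass u 0 * (c * energy p u t - energyMoment p u t) := by
      refine (h.centerGap_monotone hp ht.1).trans ?_
      have := mul_le_mul_of_nonneg_left (h.massMoment_antitone ht.1) (h.energy_nonneg t)
      unfold centerGap
      rw [h.mass_eq t 0, hc, mul_sub, ← mul_assoc, mul_div_cancel₀ _ hM.ne']
      linarith
    have := mul_le_mul_of_nonneg_left hgap (show 0 ≤ 12 / mass u 0 by positivity)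
    rw [← mul_assoc, div_mul_cancel₀ _ hM.ne'] at this
    rw [h.integral_virial_eq]
    linarith [neg_le_of_abs_le herror]
  have hbdd := h.isBoundedSolution hs
  have hvirial := le_integral_slab (f := fun t x =>
      2 * (x - c) * massFlux p u t x + 2 * massPotential u t x) hs
    ((hbdd.integrable_sub_const_mul_massFlux c).add (hbdd.integrable_massPotential.const_mul 2))
    hslice
  rw [← hbdd.secondMoment_sub_eq] at hvirial
  have hle : 12 / mass u 0 * centerGap p u s ≤ V + J := by
    linarith [hV (s + 1) ⟨hs, le_rfl⟩, secondMoment_nonneg u c s]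
  calc centerGap p u s = mass u 0 / 12 * (12 / mass u 0 * centerGap p u s) := by field
    _ ≤ mass u 0 / 12 * (V + J) := by gcongr

theorem eq_zero_of_mass_eq_zero (hM : mass u 0 = 0) : u = 0 := by
  funext t
  have hsq := h.mass_eq t 0
  rw [hM, mass, integral_eq_zero_iff_of_nonneg (fun x => sq_nonneg _)
    (h.rapidDecay t).sq.integrable] at hsq
  have hzero := ((h.rapidDecay t).continuous.pow 2).ae_eq_iff_eq volume continuous_zero |>.1 hsq
  exact funext fun x => pow_eq_zero_iff two_ne_zero |>.1 (congrFun hzero x)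

theorem eq_zero_of_secondMoment_le (hp : √3 ≤ p) {x₀ : ℝ → ℝ} {D : ℝ}
    (hD : ∀ t, secondMoment u (x₀ t) t ≤ D) : u = 0 := by
  refine h.eq_zero_of_mass_eq_zero (((mass_nonneg u 0).eq_or_lt).resolve_right fun hM => ?_).symm
  obtain ⟨b, hb, hbu⟩ := exists_pos_forall_le_integral_abs_rpow h.one_lt.le hM D
  have hub (t : ℝ) : b ≤ ∫ x, |u t x| ^ (p + 1) :=
    hbu (u t) (h.rapidDecay t) (h.mass_eq t 0) (x₀ t) (hD t) (h.rapidDecay_abs_rpow t).integrable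
  obtain ⟨B, hB⟩ := h.exists_forall_centerGap_le hp hM hD
  have hrate : 0 < (p - 1) ^ 2 / (2 * (p + 1) ^ 2) * b ^ 2 := by
    have := sub_pos.2 h.one_lt
    have := h.pos
    positivity
  obtain ⟨n, hn⟩ := exists_nat_gt
    ((B - centerGap p u 0) / ((p - 1) ^ 2 / (2 * (p + 1) ^ 2) * b ^ 2))
  rw [div_lt_iff₀' hrate] at hn
  have := h.centerGap_add_le hp hb.le hub n.cast_nonneg
  linarith [hB n]

lemma secondMoment_le_of_tail_le {c C ε t : ℝ} (hC : 0 ≤ C) (hε : 0 < ε)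
    (htail : ∀ R > 0, ∫ x in {x | R < |x - c|}, u t x ^ 2 ≤ C / R ^ (2 + ε)) :
    secondMoment u c t ≤ mass u 0 + 2 * C / ε := by
  have := integral_sq_mul_le_of_tail_le (f := fun x => |x - c|) (g := fun x => u t x ^ 2)
    (by fun_prop) (fun x => abs_nonneg _) (h.rapidDecay t).sq.integrable
    (fun x => sq_nonneg _) hC hε htail
  rw [← h.mass_eq t 0]
  simpa only [secondMoment, mass, mul_pow, sq_abs] using this

end IsSolution

end Virial

end GKdV

/-- **Nonexistence of soliton-like solutions.** For `p ≥ √3`, if `u` is a global Schwartz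
solution of the defocusing gKdV equation that is soliton-like with decay, i.e. there exist
`x : ℝ → ℝ`, `C > 0` and `ε > 0` with
`sup_t ∫_{|x−x(t)|>R} u²(t,x) dx ≤ C / R^{2+ε}` for every `R > 0`, then `u ≡ 0`. -/
theorem no_soliton_like_solution
    (p : ℝ) (hp : Real.sqrt 3 ≤ p)
    (u : ℝ → ℝ → ℝ)
    (hsmooth : ContDiff ℝ (⊤ : ℕ∞) (fun q : ℝ × ℝ => u q.1 q.2))
    (hschwartz : ∀ t : ℝ, ∃ f : SchwartzMap ℝ ℝ, ∀ x : ℝ, u t x = f x)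
    (hpde : ∀ t x : ℝ,
      deriv (fun s => u s x) t + iteratedDeriv 3 (fun y => u t y) x
        = deriv (fun y => |u t y| ^ (p - 1) * u t y) x)
    (x₀ : ℝ → ℝ) (C ε : ℝ) (hC : 0 < C) (hε : 0 < ε)
    (hdecay : ∀ R : ℝ, 0 < R → ∀ t : ℝ,
      (∫ x in {x : ℝ | R < |x - x₀ t|}, (u t x) ^ 2) ≤ C / R ^ (2 + ε)) :
    u = 0 := by
  have hsol : GKdV.IsSolution p u :=
    { one_lt := (Real.lt_sqrt zero_le_one |>.2 (by norm_num)).trans_le hp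
      smooth := hsmooth
      schwartz := hschwartz
      pde := by
        simp only [iteratedDeriv_succ, iteratedDeriv_zero] at hpde
        exact hpde }
  exact hsol.eq_zero_of_secondMoment_le hp fun t =>
    hsol.secondMoment_le_of_tail_le hC.le hε fun R hR => hdecay R hR t
end

section
/- Let u : ℝ → ℝ be a Schwartz function and a ∈ ℝ. Then ∫_ℝ (x − a)² · 2 u(x) u'''(x) dx = 6 ∫_ℝ (x − a) (u'(x))² dx. -/
open MeasureTheory Real

/-!
The identity `2 u u''' = (u²)''' - 3 ((u')²)'` turns the left-hand integrand into derivatives of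
Schwartz functions. Integrating by parts against a weight `φ` of temperate growth then gives
`∫ φ · 2 u u''' = 3 ∫ φ' (u')² - ∫ φ''' u²`, and for `φ = (x - a)²` the last term vanishes.
-/

section TemperateWeights

variable {E F V : Type*} [NormedAddCommGroup E] [NormedSpace ℝ E]
  [NormedAddCommGroup F] [NormedSpace ℝ F] [NormedAddCommGroup V] [NormedSpace ℝ V]
  {φ : ℝ → E}

lemma hasTemperateGrowth_iteratedDeriv (hφ : φ.HasTemperateGrowth) (n : ℕ) :
    (iteratedDeriv n φ).HasTemperateGrowth := by
  refine ⟨by simpa only [iteratedDeriv_eq_iterate] using hφ.1.iterate_deriv n, fun m ↦ ?_⟩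
  obtain ⟨k, C, bound⟩ := hφ.2 (m + n)
  refine ⟨k, C, fun x ↦ ?_⟩
  simpa only [norm_iteratedFDeriv_eq_norm_iteratedDeriv, iteratedDeriv_eq_iterate,
    Function.iterate_add_apply] using bound x

lemma integrable_bilinear_of_hasTemperateGrowth {D : Type*} [NormedAddCommGroup D]
    [NormedSpace ℝ D] [MeasurableSpace D] [BorelSpace D] [SecondCountableTopology D]
    {μ : Measure D} [μ.HasTemperateGrowth] (L : E →L[ℝ] F →L[ℝ] V) {ψ : D → E}
    (hψ : ψ.HasTemperateGrowth) (f : SchwartzMap D F) :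
    Integrable (fun x ↦ L (ψ x) (f x)) μ :=
  (SchwartzMap.bilinLeftCLM L.flip hψ f).integrable

lemma integral_bilinear_deriv_right_eq_neg_left_of_hasTemperateGrowth (L : E →L[ℝ] F →L[ℝ] V)
    (hφ : φ.HasTemperateGrowth) (f : SchwartzMap ℝ F) :
    ∫ x, L (φ x) (deriv f x) = -∫ x, L (deriv φ x) (f x) := by
  have hφ' : (deriv φ).HasTemperateGrowth := by
    simpa only [iteratedDeriv_one] using hasTemperateGrowth_iteratedDeriv hφ 1
  exact integral_bilinear_hasDerivAt_right_eq_neg_left_of_integrable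
    (fun x _ ↦ (hφ.1.differentiable (by simp) x).hasDerivAt) (fun x _ ↦ f.hasDerivAt x)
    (integrable_bilinear_of_hasTemperateGrowth L hφ (SchwartzMap.derivCLM ℝ F f))
    (integrable_bilinear_of_hasTemperateGrowth L hφ' f)
    (integrable_bilinear_of_hasTemperateGrowth L hφ f)

lemma integral_bilinear_iteratedDeriv_right_eq_left_of_hasTemperateGrowth
    (L : E →L[ℝ] F →L[ℝ] V) (hφ : φ.HasTemperateGrowth) (n : ℕ) (f : SchwartzMap ℝ F) :
    ∫ x, L (φ x) (iteratedDeriv n f x) =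
      (-1 : ℝ) ^ n • ∫ x, L (iteratedDeriv n φ x) (f x) := by
  induction n generalizing f with
  | zero => simp
  | succ n ih =>
    calc ∫ x, L (φ x) (iteratedDeriv (n + 1) f x)
        = ∫ x, L (φ x) (iteratedDeriv n (SchwartzMap.derivCLM ℝ F f) x) := by
          rw [iteratedDeriv_succ']; rfl
      _ = (-1 : ℝ) ^ n • ∫ x, L (iteratedDeriv n φ x) (deriv f x) := ih _
      _ = (-1 : ℝ) ^ (n + 1) • ∫ x, L (iteratedDeriv (n + 1) φ x) (f x) := by
          rw [integral_bilinear_deriv_right_eq_neg_left_of_hasTemperateGrowth L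
            (hasTemperateGrowth_iteratedDeriv hφ n), iteratedDeriv_succ, pow_succ, mul_neg_one,
            smul_neg, neg_smul]

end TemperateWeights

lemma two_mul_self_mul_iteratedDeriv_three {𝕜 A : Type*} [NontriviallyNormedField 𝕜]
    [NormedCommRing A] [NormedAlgebra 𝕜 A] {u : 𝕜 → A} {x : 𝕜} (hu : ContDiffAt 𝕜 3 u x) :
    2 * u x * iteratedDeriv 3 u x =
      iteratedDeriv 3 (fun y ↦ u y ^ 2) x - 3 * deriv (fun y ↦ deriv u y ^ 2) x := by
  have deriv_three_sq : iteratedDeriv 3 (fun y ↦ u y ^ 2) x =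
      2 * u x * iteratedDeriv 3 u x + 6 * deriv u x * iteratedDeriv 2 u x := by
    simp only [sq]
    rw [iteratedDeriv_fun_mul hu hu]
    simp only [Nat.reduceAdd, Finset.sum_range_succ, Finset.range_one, Finset.sum_singleton,
      Nat.choose, Nat.cast_one, iteratedDeriv_zero, one_mul, tsub_zero, add_zero, Nat.cast_ofNat,
      iteratedDeriv_one, Nat.add_one_sub_one, Nat.reduceSub, tsub_self]
    ring
  have deriv_sq_deriv : deriv (fun y ↦ deriv u y ^ 2) x = 2 * deriv u x * iteratedDeriv 2 u x := by
    have hu' : DifferentiableAt 𝕜 (deriv u) x :=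
      (hu.derivWithin (m := 1) (by norm_num)).differentiableAt one_ne_zero
    rw [deriv_fun_pow hu', iteratedDeriv_succ, iteratedDeriv_one]
    simp
  rw [deriv_three_sq, deriv_sq_deriv]
  ring

lemma exists_schwartzMap_eq_sq {E A : Type*} [NormedAddCommGroup E] [NormedSpace ℝ E]
    [NormedRing A] [NormedAlgebra ℝ A] (f : SchwartzMap E A) :
    ∃ g : SchwartzMap E A, ⇑g = fun x ↦ f x ^ 2 :=
  ⟨SchwartzMap.pairing (ContinuousLinearMap.mul ℝ A) f f, funext fun x ↦ (sq (f x)).symm⟩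

theorem weighted_ibp_third_derivative_general {A : Type*} [NormedCommRing A] [NormedAlgebra ℝ A]
    [CompleteSpace A] {φ : ℝ → A} (hφ : φ.HasTemperateGrowth) (u : SchwartzMap ℝ A) :
    ∫ x, φ x * (2 * u x * iteratedDeriv 3 u x) =
      3 * (∫ x, deriv φ x * deriv u x ^ 2) - ∫ x, iteratedDeriv 3 φ x * u x ^ 2 := by
  let mulL := ContinuousLinearMap.mul ℝ A
  let D := SchwartzMap.derivCLM ℝ A
  obtain ⟨U, hU⟩ := exists_schwartzMap_eq_sq u
  obtain ⟨V, hV⟩ := exists_schwartzMap_eq_sq (D u)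
  have integrable_U : Integrable (fun x ↦ φ x * iteratedDeriv 3 U x) := by
    rw [iteratedDeriv_eq_iterate]
    exact integrable_bilinear_of_hasTemperateGrowth mulL hφ (D (D (D U)))
  have integrable_V : Integrable (fun x ↦ φ x * deriv V x) :=
    integrable_bilinear_of_hasTemperateGrowth mulL hφ (D V)
  have parts_U : ∫ x, φ x * iteratedDeriv 3 U x = (-1 : ℝ) ^ 3 • ∫ x, iteratedDeriv 3 φ x * U x :=
    integral_bilinear_iteratedDeriv_right_eq_left_of_hasTemperateGrowth mulL hφ 3 U
  have parts_V : ∫ x, φ x * deriv V x = -∫ x, deriv φ x * V x :=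
    integral_bilinear_deriv_right_eq_neg_left_of_hasTemperateGrowth mulL hφ V
  calc ∫ x, φ x * (2 * u x * iteratedDeriv 3 u x)
      = ∫ x, (φ x * iteratedDeriv 3 U x - 3 * (φ x * deriv V x)) := by
        simp only [two_mul_self_mul_iteratedDeriv_three (u.smooth 3).contDiffAt, hU, hV, D,
          SchwartzMap.derivCLM_apply, mul_sub, mul_left_comm]
    _ = (∫ x, φ x * iteratedDeriv 3 U x) - 3 * ∫ x, φ x * deriv V x := by
        rw [integral_sub integrable_U (integrable_V.const_mul 3),
          integral_const_mul_of_integrable integrable_V]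
    _ = 3 * (∫ x, deriv φ x * V x) - ∫ x, iteratedDeriv 3 φ x * U x := by
        rw [parts_U, parts_V, Odd.neg_one_pow (by decide), neg_one_smul]
        ring
    _ = 3 * (∫ x, deriv φ x * deriv u x ^ 2) - ∫ x, iteratedDeriv 3 φ x * u x ^ 2 := by
        simp only [hU, hV, D, SchwartzMap.derivCLM_apply]

/-- Integration by parts identity for the linear (Airy) part: for a Schwartz function `u`
and `a ∈ ℝ`, `∫ (x − a)² · 2 u u''' dx = 6 ∫ (x − a) (u')² dx`. -/
theorem weighted_ibp_third_derivative
    (u : SchwartzMap ℝ ℝ) (a : ℝ) :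
    (∫ x : ℝ, (x - a) ^ 2 * (2 * u x * iteratedDeriv 3 (fun y => u y) x))
      = 6 * ∫ x : ℝ, (x - a) * (deriv (fun y => u y) x) ^ 2 := by
  have weight_deriv (x : ℝ) : deriv (fun y ↦ (y - a) ^ 2) x = 2 * (x - a) := by
    simp
  have weight_iteratedDeriv_three (x : ℝ) : iteratedDeriv 3 (fun y ↦ (y - a) ^ 2) x = 0 := by
    simp [iteratedDeriv_comp_sub_const 3 (fun y : ℝ ↦ y ^ 2) a]
  rw [weighted_ibp_third_derivative_general (φ := fun x ↦ (x - a) ^ 2) (by fun_prop) u]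
  simp only [weight_deriv, weight_iteratedDeriv_three, mul_assoc, integral_const_mul, zero_mul,
    integral_zero, sub_zero]
  ring
end
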